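/- Let g be an integer with |g| > 1 which is not a perfect square, write g = g₀^h with g₀ ∈ ℤ and h ∈ ℕ maximal, and let d be the discriminant of ℚ(√g) (i.e. d = g₁ if the squarefree kernel g₁ of g satisfies g₁ ≡ 1 (mod 4), and d = 4g₁ otherwise). For an odd prime p not dividing g define φ_g(p) = 2·φ(p−1)/(p−1) if the Legendre symbol (g/p) = −1 and gcd(p−1, h) = 1, and φ_g(p) = 0 otherwise (also set φ_g(p) = 0 for p = 2 or p | g). Then the limit as N → ∞ of (1/N) · ∑_{i=1}^N φ_g(p_i), where p_i is the i-th prime, exists and equals A(g) = A_h · A_d, where A_h = ∏_{p | h} (1 − 1/(p−1)) · ∏_{p ∤ h} (1 − 1/(p(p−1))) (products over primes p), and A_d = 1 − μ(|d|) · ∏_{q prime, q | d, q | h} 1/(q − 2) · ∏_{q prime, q | d, q ∤ h} 1/(q² − q − 1). -/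

import Mathlib

open Filter

/-!
By the Wiener–Ikehara theorem the primes, weighted by `log p`, are equidistributed in the reduced
residue classes of each modulus, so a periodic function of `p` has a mean over the primes, equal to
its mean over the reduced classes. Partial summation removes the weight. The function `φ_g` is not
periodic, but outside finitely many primes

  `φ_g(p) = (1 - (g/p)) * ∏_{q ∣ p - 1} (1 - c q)`,

where `c q = 1` if `q ∣ h` and `c q = 1 / q` otherwise. Keeping only the factors with `q ≤ Y` makes
it periodic. Quadratic reciprocity writes `(g/p) = (g₁/p)` as a character modulo a power of two
times the product of the `(p/q)` over the odd primes `q ∣ g₁`, so by the Chinese remainder theorem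
the mean is a product of local means. The local factor at `q` is `1 - c q / (q - 1)`, and
`-c q / (q - 1)` when it is twisted by `(p/q)`: the untwisted factors make up `A_h`, the ratios
`A_d`. The character modulo a power of two has mean zero unless `g₁ ≡ 1 (mod 4)`, which matches the
vanishing of `μ(|d|)`.

The truncation costs at most twice the sum of `1 / q` over the primes `q > Y` dividing `p - 1`.
The mean of this over the primes tends to zero as `Y` grows, because the primes `p ≤ N` with
`p ≡ 1 (mod q)` have total weight `O(N log q / q)`: apart from the `p ≤ M`, with `M` about `N / q`,
their product divides the quotient of `∏_{m < M} (q m + 1)` by the prime-to-`q` part of `M!`,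
which is at most `q ^ (2 M)`.
-/

section Kernel

open MeasureTheory Topology FourierTransform Complex
open scoped ContDiff Convolution

/-- A continuous compactly supported function `L` whose Fourier transform is a probability density
`K`: the smoothing kernels of the Tauberian argument. -/
structure BandLimitedKernel (L : ℝ → ℂ) (K : ℝ → ℝ) : Prop where
  continuous : Continuous L
  hasCompactSupport : HasCompactSupport L
  nonneg : ∀ t, 0 ≤ K t
  integrable : Integrable K
  integral_eq_one : ∫ t, K t = 1
  fourier_eq : ∀ t, 𝓕 L t = K t

lemma ofReal_re_fourier_of_even {f : ℝ → ℝ} (hf : ∀ x, f (-x) = f x) (t : ℝ) :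
    ((𝓕 (fun x ↦ (f x : ℂ)) t).re : ℂ) = 𝓕 (fun x ↦ (f x : ℂ)) t := by
  rw [← Complex.conj_eq_iff_re, Real.fourier_real_eq_integral_exp_smul, ← integral_conj,
    ← integral_neg_eq_self]
  congr 1 with x
  simp only [smul_eq_mul, map_mul, hf, ← Complex.exp_conj, conj_ofReal, conj_I]
  congr 2
  push_cast
  ring

lemma integrable_re_fourier_bump_sq (b : ContDiffBump (0 : ℝ)) :
    Integrable fun t ↦ (𝓕 (fun x ↦ (b x : ℂ)) t).re ^ 2 := by
  have hb : ContDiff ℝ ∞ fun x ↦ (b x : ℂ) := Complex.ofRealCLM.contDiff.comp b.contDiff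
  have hs : HasCompactSupport fun x ↦ (b x : ℂ) :=
    b.hasCompactSupport.comp_left (g := fun x : ℝ ↦ (x : ℂ)) ofReal_zero
  let f : SchwartzMap ℝ ℂ := hs.toSchwartzMap hb
  have hf : (f : ℝ → ℂ) = fun x ↦ (b x : ℂ) := rfl
  refine (SchwartzMap.integrable
    (SchwartzMap.pairing (ContinuousLinearMap.mul ℂ ℂ) (𝓕 f) (𝓕 f))).re.congr
      (ae_of_all _ fun t ↦ ?_)
  simp only [SchwartzMap.pairing_apply_apply, SchwartzMap.fourier_coe, hf,
    ContinuousLinearMap.mul_apply']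
  rw [← ofReal_re_fourier_of_even b.neg t]
  simp [pow_two]

/-- The witness is the normalised autoconvolution of a bump function, whose Fourier transform is
the square of a real function. -/
lemma exists_bandLimitedKernel : ∃ L K, BandLimitedKernel L K := by
  let b : ContDiffBump (0 : ℝ) := ⟨1, 2, by norm_num, by norm_num⟩
  let f : ℝ → ℂ := fun x ↦ (b x : ℂ)
  let K : ℝ → ℝ := fun t ↦ (𝓕 f t).re ^ 2
  have hf : Continuous f := continuous_ofReal.comp b.continuous
  have hfs : HasCompactSupport f :=
    b.hasCompactSupport.comp_left (g := fun x : ℝ ↦ (x : ℂ)) ofReal_zero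
  have hfi : Integrable f := hf.integrable_of_hasCompactSupport hfs
  have hKi : Integrable K := integrable_re_fourier_bump_sq b
  have hKc : Continuous K := by
    have : Continuous (𝓕 f) := VectorFourier.fourierIntegral_continuous
      Real.continuous_fourierChar continuous_inner hfi
    fun_prop
  have hpos : 0 < ∫ t, K t := by
    refine integral_pos_of_integrable_nonneg_nonzero (x := 0) hKc hKi (fun t ↦ sq_nonneg _) ?_
    have h0 : 𝓕 f 0 = ((∫ x, b x : ℝ) : ℂ) := by
      rw [Real.fourier_real_eq_integral_exp_smul, ← integral_complex_ofReal]
      simp [f]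
    simp only [K, h0, ofReal_re]
    exact pow_ne_zero 2 b.integral_pos.ne'
  set c := ∫ t, K t with hc
  have hconv : ∀ t, 𝓕 (f ⋆[ContinuousLinearMap.mul ℂ ℂ] f) t = K t := fun t ↦ by
    rw [Real.fourier_mul_convolution_eq hfi hfi, ← ofReal_re_fourier_of_even b.neg t]
    simp [K, f, pow_two]
  have hLc : Continuous (f ⋆[ContinuousLinearMap.mul ℂ ℂ] f) :=
    hfs.continuous_convolution_right _ hfi.locallyIntegrable hf
  refine ⟨((c⁻¹ : ℝ) : ℂ) • (f ⋆[ContinuousLinearMap.mul ℂ ℂ] f), fun t ↦ c⁻¹ * K t,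
    hLc.const_smul _, (hfs.convolution _ hfs).comp_left (g := fun z : ℂ ↦ ((c⁻¹ : ℝ) : ℂ) • z)
    (smul_zero _), fun t ↦ mul_nonneg (inv_nonneg.2 hpos.le) (sq_nonneg _), hKi.const_mul _, ?_,
    fun t ↦ ?_⟩
  · rw [integral_const_mul, ← hc, inv_mul_cancel₀ hpos.ne']
  · exact (congrFun (VectorFourier.fourierIntegral_const_smul Real.fourierChar volume (innerₗ ℝ)
      (f ⋆[ContinuousLinearMap.mul ℂ ℂ] f) ((c⁻¹ : ℝ) : ℂ)) t).trans
      ((congrArg (((c⁻¹ : ℝ) : ℂ) • ·) (hconv t)).trans (ofReal_mul _ _).symm)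

lemma tendsto_setIntegral_lt_abs_atTop {K : ℝ → ℝ} (hK : Integrable K) :
    Tendsto (fun r ↦ ∫ t in {t : ℝ | r < |t|}, K t) atTop (𝓝 0) := by
  have hanti : Antitone fun r : ℝ ↦ {t : ℝ | r < |t|} := fun r s hrs t ht ↦ hrs.trans_lt ht
  have hempty : ⋂ r : ℝ, {t : ℝ | r < |t|} = ∅ :=
    Set.eq_empty_iff_forall_notMem.2 fun t ht ↦ lt_irrefl |t| (Set.mem_iInter.1 ht |t|)
  simpa [hempty] using tendsto_setIntegral_of_antitone
    (fun r ↦ measurableSet_lt measurable_const measurable_abs) hanti ⟨0, hK.integrableOn⟩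

namespace BandLimitedKernel

variable {L : ℝ → ℂ} {K : ℝ → ℝ}

lemma dilate (hLK : BandLimitedKernel L K) {l : ℝ} (hl : 0 < l) :
    BandLimitedKernel (fun x ↦ L (l⁻¹ * x)) fun t ↦ l * K (l * t) where
  continuous := hLK.continuous.comp (continuous_const.mul continuous_id)
  hasCompactSupport := hLK.hasCompactSupport.comp_homeomorph
    (Homeomorph.mulLeft₀ l⁻¹ (inv_ne_zero hl.ne'))
  nonneg t := mul_nonneg hl.le (hLK.nonneg _)
  integrable := (hLK.integrable.comp_mul_left' hl.ne').const_mul _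
  integral_eq_one := by
    rw [integral_const_mul, Measure.integral_comp_mul_left K l, hLK.integral_eq_one]
    simp [abs_of_pos hl, hl.ne']
  fourier_eq t := by
    have hscale := Measure.integral_comp_mul_left
      (fun v ↦ cexp (↑(-2 * Real.pi * v * (l * t)) * I) • L v) l⁻¹
    rw [← Real.fourier_real_eq_integral_exp_smul, hLK.fourier_eq, inv_inv, abs_of_pos hl]
      at hscale
    rw [ofReal_mul, ← real_smul, ← hscale, Real.fourier_real_eq_integral_exp_smul]
    congr! 6 with v
    field_simp

lemma integral_compl_abs_gt (hLK : BandLimitedKernel L K) (η : ℝ) :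
    ∫ t in {t : ℝ | η < |t|}ᶜ, K t = 1 - ∫ t in {t : ℝ | η < |t|}, K t := by
  rw [← hLK.integral_eq_one, ← integral_add_compl
    (measurableSet_lt measurable_const measurable_abs) hLK.integrable, add_sub_cancel_left]

end BandLimitedKernel

lemma exists_bandLimitedKernel_concentrated {η ε : ℝ} (hη : 0 < η) (hε : 0 < ε) :
    ∃ L K, BandLimitedKernel L K ∧ ∫ t in {t : ℝ | η < |t|}, K t < ε := by
  obtain ⟨L, K, hLK⟩ := exists_bandLimitedKernel
  have htail : Tendsto (fun l ↦ ∫ t in {t : ℝ | l * η < |t|}, K t) atTop (𝓝 0) :=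
    (tendsto_setIntegral_lt_abs_atTop hLK.integrable).comp (tendsto_id.atTop_mul_const hη)
  obtain ⟨l, hlε, hl⟩ := ((htail.eventually (gt_mem_nhds hε)).and (eventually_gt_atTop 0)).exists
  refine ⟨_, _, hLK.dilate hl, ?_⟩
  have hpre : {t : ℝ | η < |t|} = (l * ·) ⁻¹' {t : ℝ | l * η < |t|} := by
    ext t
    simp [abs_mul, abs_of_pos hl, hl]
  have hmeas (r : ℝ) : MeasurableSet {t : ℝ | r < |t|} :=
    measurableSet_lt measurable_const measurable_abs
  have hind (t : ℝ) : ((l * ·) ⁻¹' {t : ℝ | l * η < |t|}).indicator (fun t ↦ K (l * t)) t =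
      {t : ℝ | l * η < |t|}.indicator K (l * t) := Set.indicator_comp_right (l * ·)
  rw [integral_const_mul, ← integral_indicator (hmeas _), hpre]
  simp_rw [hind]
  rw [Measure.integral_comp_mul_left, integral_indicator (hmeas _), abs_of_pos (inv_pos.2 hl),
    smul_eq_mul, mul_inv_cancel_left₀ hl.ne']
  exact hlε

end Kernel

section Tauberian

open MeasureTheory Topology FourierTransform Complex
open Set (Ioi)

lemma fourier_exp_mul (L : ℝ → ℂ) (u t : ℝ) :
    𝓕 (fun ξ : ℝ ↦ cexp (2 * Real.pi * u * ξ * I) * L ξ) t = 𝓕 L (t - u) := by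
  rw [Real.fourier_real_eq_integral_exp_smul, Real.fourier_real_eq_integral_exp_smul]
  congr 1 with ξ
  rw [smul_eq_mul, smul_eq_mul, ← mul_assoc, ← Complex.exp_add]
  congr 2
  push_cast
  ring

lemma integrable_exp_mul_I_mul {L : ℝ → ℂ} (hL : Integrable L) (u : ℝ) :
    Integrable fun ξ : ℝ ↦ cexp (2 * Real.pi * u * ξ * I) * L ξ := by
  refine hL.bdd_mul (c := 1) (by fun_prop) (ae_of_all _ fun ξ ↦ ?_)
  have harg : (2 * Real.pi * u * ξ * I : ℂ) = ((2 * Real.pi * u * ξ : ℝ) : ℂ) * I := by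
    push_cast
    rfl
  rw [harg, norm_exp_ofReal_mul_I]

lemma fourier_laplace_mul {μ : Measure ℝ} [SigmaFinite μ] {f L : ℝ → ℂ} (hf : Integrable f μ)
    (hL : Integrable L) (u : ℝ) :
    𝓕 (fun ξ : ℝ ↦ (∫ t, f t * cexp (-(2 * Real.pi * ξ * I) * t) ∂μ) * L ξ) (-u) =
      ∫ t, f t * 𝓕 L (t - u) ∂μ := by
  have hflip := VectorFourier.integral_fourierIntegral_smul_eq_flip (L := innerₗ ℝ)
    Real.continuous_fourierChar continuous_inner hf (integrable_exp_mul_I_mul hL u)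
  have hleft (ξ : ℝ) : VectorFourier.fourierIntegral Real.fourierChar μ (innerₗ ℝ) f ξ =
      ∫ t, f t * cexp (-(2 * Real.pi * ξ * I) * t) ∂μ := by
    rw [VectorFourier.fourierIntegral]
    congr 1 with t
    rw [Circle.smul_def, Real.fourierChar_apply, smul_eq_mul, mul_comm]
    congr 2
    simp
    ring
  have hright (t : ℝ) : VectorFourier.fourierIntegral Real.fourierChar volume (innerₗ ℝ).flip
      (fun ξ : ℝ ↦ cexp (2 * Real.pi * u * ξ * I) * L ξ) t = 𝓕 L (t - u) := by
    rw [flip_innerₗ]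
    exact fourier_exp_mul L u t
  simp_rw [hleft, hright, smul_eq_mul] at hflip
  rw [← hflip, Real.fourier_real_eq_integral_exp_smul]
  congr 1 with ξ
  rw [smul_eq_mul, mul_left_comm]
  congr 3
  push_cast
  ring

lemma tendsto_fourier_vertical {G : ℂ → ℂ} (hG : ContinuousOn G {z | 0 ≤ z.re}) {L : ℝ → ℂ}
    (hLc : Continuous L) (hLs : HasCompactSupport L) (w : ℝ) :
    Tendsto (fun δ : ℝ ↦ 𝓕 (fun ξ : ℝ ↦ G (δ + 2 * Real.pi * ξ * I) * L ξ) w) (𝓝[>] 0)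
      (𝓝 (𝓕 (fun ξ : ℝ ↦ G (2 * Real.pi * ξ * I) * L ξ) w)) := by
  have hmem (δ ξ : ℝ) (hδ : 0 ≤ δ) : (δ + 2 * Real.pi * ξ * I : ℂ) ∈ {z : ℂ | 0 ≤ z.re} := by
    simpa using hδ
  obtain ⟨B, hB⟩ : ∃ B, ∀ x ∈ Set.Icc (0 : ℝ) 1 ×ˢ tsupport L,
      ‖G (x.1 + 2 * Real.pi * x.2 * I)‖ ≤ B :=
    (isCompact_Icc.prod hLs).exists_bound_of_continuousOn
      (hG.comp (by fun_prop) fun x hx ↦ hmem _ _ hx.1.1)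
  simp_rw [Real.fourier_real_eq_integral_exp_smul]
  refine tendsto_integral_filter_of_dominated_convergence (fun ξ ↦ B * ‖L ξ‖) ?_ ?_
    ((hLc.integrable_of_hasCompactSupport hLs).norm.const_mul B) (ae_of_all _ fun ξ ↦ ?_)
  · filter_upwards [self_mem_nhdsWithin] with δ hδ
    have hGc : Continuous fun ξ : ℝ ↦ G (δ + 2 * Real.pi * ξ * I) :=
      hG.comp_continuous (by fun_prop) fun ξ ↦ hmem _ _ (le_of_lt hδ)
    have hexp : Continuous fun ξ : ℝ ↦ cexp (↑(-2 * Real.pi * ξ * w) * I) := by fun_prop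
    exact (hexp.smul (hGc.mul hLc)).aestronglyMeasurable
  · filter_upwards [Ioo_mem_nhdsGT (zero_lt_one' ℝ)] with δ hδ
    refine ae_of_all _ fun ξ ↦ ?_
    rw [norm_smul, norm_exp_ofReal_mul_I, one_mul, norm_mul]
    by_cases hξ : ξ ∈ tsupport L
    · gcongr
      exact hB (δ, ξ) ⟨⟨hδ.1.le, hδ.2.le⟩, hξ⟩
    · simp [image_eq_zero_of_notMem_tsupport hξ]
  · refine ((Tendsto.mul_const _ ?_)).const_smul _
    have hlim : Tendsto (fun δ : ℝ ↦ (δ + 2 * Real.pi * ξ * I : ℂ)) (𝓝[>] 0)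
        (𝓝 (2 * Real.pi * ξ * I)) := by
      have : Continuous fun δ : ℝ ↦ (δ + 2 * Real.pi * ξ * I : ℂ) := by fun_prop
      simpa using (this.tendsto 0).mono_left nhdsWithin_le_nhds
    refine (hG (2 * Real.pi * ξ * I) (by simp)).tendsto.comp
      (tendsto_nhdsWithin_iff.2 ⟨hlim, ?_⟩)
    filter_upwards [self_mem_nhdsWithin] with δ hδ using hmem _ _ (le_of_lt hδ)

lemma tendsto_integral_exp_neg_mul {F : ℝ → ℂ} (hF : IntegrableOn F (Ioi 0)) :
    Tendsto (fun δ : ℝ ↦ ∫ t in Ioi (0 : ℝ), cexp (-δ * t) * F t) (𝓝[>] 0)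
      (𝓝 (∫ t in Ioi 0, F t)) := by
  refine tendsto_integral_filter_of_dominated_convergence (fun t ↦ ‖F t‖) ?_ ?_ hF.norm
    (ae_of_all _ fun t ↦ ?_)
  · exact Eventually.of_forall fun δ ↦
      AEStronglyMeasurable.mul (by fun_prop) hF.aestronglyMeasurable
  · filter_upwards [self_mem_nhdsWithin] with δ (hδ : 0 < δ)
    filter_upwards [ae_restrict_mem measurableSet_Ioi] with t (ht : 0 < t)
    rw [norm_mul, Complex.norm_exp]
    refine mul_le_of_le_one_left (norm_nonneg _) (Real.exp_le_one_iff.2 ?_)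
    simpa using (mul_pos hδ ht).le
  · have : Continuous fun δ : ℝ ↦ cexp (-δ * t) * F t := by fun_prop
    simpa using (this.tendsto 0).mono_left nhdsWithin_le_nhds

/-- The Laplace transform of `R` at `δ + 2πiξ`, multiplied by `L`, has Fourier transform the
smoothing of `R`; letting `δ → 0⁺`, the Riemann–Lebesgue lemma makes the smoothing vanish at
infinity. -/
lemma tendsto_integral_mul_fourier_of_laplace {R : ℝ → ℂ} {C : ℝ}
    (hRm : AEStronglyMeasurable R (volume.restrict (Ioi 0))) (hRC : ∀ t, ‖R t‖ ≤ C) {G : ℂ → ℂ}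
    (hG : ContinuousOn G {z | 0 ≤ z.re})
    (hGR : ∀ z : ℂ, 0 < z.re → ∫ t in Ioi (0 : ℝ), R t * cexp (-z * t) = G z)
    {L : ℝ → ℂ} (hLc : Continuous L) (hLs : HasCompactSupport L) (hFL : Integrable (𝓕 L)) :
    Tendsto (fun u ↦ ∫ t in Ioi 0, R t * 𝓕 L (t - u)) atTop (𝓝 0) := by
  have hLi : Integrable L := hLc.integrable_of_hasCompactSupport hLs
  have hdamped (δ : ℝ) (hδ : 0 < δ) (u : ℝ) :
      𝓕 (fun ξ : ℝ ↦ G (δ + 2 * Real.pi * ξ * I) * L ξ) (-u) =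
        ∫ t in Ioi (0 : ℝ), cexp (-δ * t) * (R t * 𝓕 L (t - u)) := by
    have hexp : IntegrableOn (fun t : ℝ ↦ cexp (-δ * t)) (Ioi 0) :=
      integrableOn_exp_mul_complex_Ioi (by simpa using hδ) 0
    have hInt : IntegrableOn (fun t : ℝ ↦ R t * cexp (-δ * t)) (Ioi 0) :=
      hexp.bdd_mul hRm (ae_of_all _ hRC)
    calc _ = 𝓕 (fun ξ : ℝ ↦ (∫ t in Ioi (0 : ℝ), R t * cexp (-δ * t) *
              cexp (-(2 * Real.pi * ξ * I) * t)) * L ξ) (-u) := by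
          refine congrArg (fun H : ℝ → ℂ ↦ 𝓕 H (-u)) (funext fun ξ ↦ ?_)
          rw [← hGR _ (by simpa using hδ)]
          simp_rw [mul_assoc (R _), ← Complex.exp_add, ← add_mul, neg_add]
      _ = ∫ t in Ioi 0, R t * cexp (-δ * t) * 𝓕 L (t - u) := fourier_laplace_mul hInt hLi u
      _ = _ := by simp_rw [mul_left_comm (cexp _), mul_assoc]
  have hboundary (u : ℝ) : 𝓕 (fun ξ : ℝ ↦ G (2 * Real.pi * ξ * I) * L ξ) (-u) =
      ∫ t in Ioi 0, R t * 𝓕 L (t - u) := by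
    have hInt : IntegrableOn (fun t ↦ R t * 𝓕 L (t - u)) (Ioi 0) :=
      (hFL.comp_sub_right u).integrableOn.bdd_mul hRm (ae_of_all _ hRC)
    refine tendsto_nhds_unique (tendsto_fourier_vertical hG hLc hLs (-u))
      ((tendsto_integral_exp_neg_mul hInt).congr' ?_)
    filter_upwards [self_mem_nhdsWithin] with δ hδ using (hdamped δ hδ u).symm
  refine Tendsto.congr hboundary ?_
  exact (Real.zero_at_infty_fourier _).comp
    (tendsto_neg_atTop_atBot.mono_right atBot_le_cocompact)

lemma setIntegral_Ioi_zero_eq_add_right (f : ℝ → ℝ) (u : ℝ) :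
    ∫ t in Ioi 0, f t = ∫ v in Ioi (-u), f (v + u) := by
  rw [← (measurePreserving_add_right volume u).setIntegral_preimage_emb
    (measurableEmbedding_addRight u), Set.preimage_add_const_Ioi, zero_sub]

lemma BandLimitedKernel.tendsto_setIntegral_Ioi {L : ℝ → ℂ} {K : ℝ → ℝ}
    (hLK : BandLimitedKernel L K) :
    Tendsto (fun u ↦ ∫ t in Ioi 0, K (t - u)) atTop (𝓝 1) := by
  simp_rw [fun u ↦ setIntegral_Ioi_zero_eq_add_right (fun t ↦ K (t - u)) u, add_sub_cancel_right]
  rw [← hLK.integral_eq_one]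
  exact (aecover_Ioi tendsto_neg_atTop_atBot).integral_tendsto_of_countably_generated
    hLK.integrable

section SlowlyDecreasing

variable {S : ℝ → ℝ} {C : ℝ} {L : ℝ → ℂ} {K : ℝ → ℝ}

lemma le_mul_exp_of_monotone_mul_exp (hmono : Monotone fun t ↦ S t * Real.exp t) {s t : ℝ}
    (hst : s ≤ t) : S s ≤ S t * Real.exp (t - s) := by
  rw [Real.exp_sub, ← mul_div_assoc, le_div_iff₀ (Real.exp_pos _)]
  exact hmono hst

lemma measurable_of_monotone_mul_exp (hmono : Monotone fun t ↦ S t * Real.exp t) :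
    Measurable S := by
  have hS : S = fun t ↦ S t * Real.exp t * Real.exp (-t) := by
    ext t
    rw [mul_assoc, ← Real.exp_add, add_neg_cancel, Real.exp_zero, mul_one]
  rw [hS]
  exact hmono.measurable.mul (by fun_prop)

lemma BandLimitedKernel.integrable_comp_add_mul (hLK : BandLimitedKernel L K)
    (hmono : Monotone fun t ↦ S t * Real.exp t) (hS : ∀ t, 0 ≤ S t) (hSC : ∀ t, S t ≤ C) (u : ℝ) :
    Integrable fun v ↦ S (v + u) * K v := by
  refine hLK.integrable.bdd_mul (c := C)
    ((measurable_of_monotone_mul_exp hmono).comp (measurable_add_const u)).aestronglyMeasurable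
    (ae_of_all _ fun v ↦ ?_)
  rw [Real.norm_of_nonneg (hS _)]
  exact hSC _

lemma BandLimitedKernel.setIntegral_mul_le (hLK : BandLimitedKernel L K)
    (hmono : Monotone fun t ↦ S t * Real.exp t) (hS : ∀ t, 0 ≤ S t) (hSC : ∀ t, S t ≤ C)
    (η u : ℝ) :
    ∫ t in Ioi 0, S t * K (t - u) ≤
      Real.exp (2 * η) * S (u + η) + C * ∫ t in {t : ℝ | η < |t|}, K t := by
  have hmeas : MeasurableSet {t : ℝ | η < |t|} := measurableSet_lt measurable_const measurable_abs
  have hInt := hLK.integrable_comp_add_mul hmono hS hSC u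
  have hpointwise (v : ℝ) : S (v + u) * K v ≤
      Real.exp (2 * η) * S (u + η) * K v + C * {t : ℝ | η < |t|}.indicator K v := by
    have hfar : 0 ≤ Real.exp (2 * η) * S (u + η) * K v :=
      mul_nonneg (mul_nonneg (Real.exp_pos _).le (hS _)) (hLK.nonneg v)
    by_cases hv : η < |v|
    · rw [Set.indicator_of_mem (show v ∈ {t : ℝ | η < |t|} from hv)]
      linarith [mul_le_mul_of_nonneg_right (hSC (v + u)) (hLK.nonneg v)]
    · rw [Set.indicator_of_notMem (show v ∉ {t : ℝ | η < |t|} from hv), mul_zero, add_zero]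
      obtain ⟨hv₁, hv₂⟩ := abs_le.1 (not_lt.1 hv)
      refine mul_le_mul_of_nonneg_right ?_ (hLK.nonneg v)
      calc S (v + u) ≤ S (u + η) * Real.exp (u + η - (v + u)) :=
            le_mul_exp_of_monotone_mul_exp hmono (by linarith)
        _ ≤ S (u + η) * Real.exp (2 * η) := by
            gcongr
            · exact hS _
            · linarith
        _ = _ := mul_comm _ _
  calc ∫ t in Ioi 0, S t * K (t - u) = ∫ v in Ioi (-u), S (v + u) * K v := by
        rw [setIntegral_Ioi_zero_eq_add_right _ u]
        simp_rw [add_sub_cancel_right]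
    _ ≤ ∫ v, S (v + u) * K v :=
        setIntegral_le_integral hInt (ae_of_all _ fun v ↦ mul_nonneg (hS _) (hLK.nonneg v))
    _ ≤ ∫ v, (Real.exp (2 * η) * S (u + η) * K v + C * {t : ℝ | η < |t|}.indicator K v) :=
        integral_mono hInt ((hLK.integrable.const_mul _).add
          ((hLK.integrable.indicator hmeas).const_mul C)) hpointwise
    _ = Real.exp (2 * η) * S (u + η) + C * ∫ t in {t : ℝ | η < |t|}, K t := by
        rw [integral_add (hLK.integrable.const_mul _)
          ((hLK.integrable.indicator hmeas).const_mul C), integral_const_mul, integral_const_mul,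
          hLK.integral_eq_one, mul_one, integral_indicator hmeas]

lemma BandLimitedKernel.le_setIntegral_mul (hLK : BandLimitedKernel L K)
    (hmono : Monotone fun t ↦ S t * Real.exp t) (hS : ∀ t, 0 ≤ S t) (hSC : ∀ t, S t ≤ C)
    {η u : ℝ} (hu : η < u) :
    S (u - η) * Real.exp (-(2 * η)) * (1 - ∫ t in {t : ℝ | η < |t|}, K t) ≤
      ∫ t in Ioi 0, S t * K (t - u) := by
  have hmeas : MeasurableSet {t : ℝ | η < |t|} := measurableSet_lt measurable_const measurable_abs
  have hInt := hLK.integrable_comp_add_mul hmono hS hSC u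
  have hnear (v : ℝ) (hv : v ∈ {t : ℝ | η < |t|}ᶜ) : |v| ≤ η := by simpa using hv
  calc S (u - η) * Real.exp (-(2 * η)) * (1 - ∫ t in {t : ℝ | η < |t|}, K t)
      = ∫ v in {t : ℝ | η < |t|}ᶜ, S (u - η) * Real.exp (-(2 * η)) * K v := by
        rw [integral_const_mul, hLK.integral_compl_abs_gt]
    _ ≤ ∫ v in {t : ℝ | η < |t|}ᶜ, S (v + u) * K v := by
        refine setIntegral_mono_on (hLK.integrable.const_mul _).integrableOn hInt.integrableOn
          hmeas.compl fun v hv ↦ mul_le_mul_of_nonneg_right ?_ (hLK.nonneg v)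
        obtain ⟨hv₁, hv₂⟩ := abs_le.1 (hnear v hv)
        rw [Real.exp_neg, ← div_eq_mul_inv, div_le_iff₀ (Real.exp_pos _)]
        refine (le_mul_exp_of_monotone_mul_exp hmono (show u - η ≤ v + u by linarith)).trans ?_
        gcongr
        · exact hS _
        · linarith
    _ ≤ ∫ v in Ioi (-u), S (v + u) * K v := by
        refine setIntegral_mono_set hInt.integrableOn
          (ae_of_all _ fun v ↦ mul_nonneg (hS _) (hLK.nonneg v)) (LE.le.eventuallyLE fun v hv ↦ ?_)
        exact Set.mem_Ioi.2 (by linarith [(abs_le.1 (hnear v hv)).1])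
    _ = ∫ t in Ioi 0, S t * K (t - u) := by
        rw [setIntegral_Ioi_zero_eq_add_right _ u]
        simp_rw [add_sub_cancel_right]

lemma BandLimitedKernel.tendsto_setIntegral_mul (hLK : BandLimitedKernel L K)
    (hmono : Monotone fun t ↦ S t * Real.exp t) (hS : ∀ t, 0 ≤ S t) (hSC : ∀ t, S t ≤ C)
    {A : ℝ} {G : ℂ → ℂ} (hG : ContinuousOn G {z | 0 ≤ z.re})
    (hGS : ∀ z : ℂ, 0 < z.re → ∫ t in Ioi (0 : ℝ), ((S t - A : ℝ) : ℂ) * cexp (-z * t) = G z) :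
    Tendsto (fun u ↦ ∫ t in Ioi 0, S t * K (t - u)) atTop (𝓝 A) := by
  have hbdd (t : ℝ) : ‖((S t - A : ℝ) : ℂ)‖ ≤ C + |A| := by
    rw [norm_real, Real.norm_eq_abs]
    exact (abs_sub _ _).trans (add_le_add_left ((abs_of_nonneg (hS t)).trans_le (hSC t)) _)
  have hFL : 𝓕 L = fun t ↦ (K t : ℂ) := funext hLK.fourier_eq
  have hSm := measurable_of_monotone_mul_exp hmono
  have hzero := tendsto_integral_mul_fourier_of_laplace (Measurable.aestronglyMeasurable
    (by fun_prop)) hbdd hG hGS hLK.continuous hLK.hasCompactSupport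
    (hFL ▸ hLK.integrable.ofReal)
  simp_rw [hLK.fourier_eq, ← ofReal_mul, integral_complex_ofReal] at hzero
  have hzero' := (continuous_re.tendsto 0).comp hzero
  have hsplit (u : ℝ) : (∫ t in Ioi 0, (S t - A) * K (t - u)) + A * ∫ t in Ioi 0, K (t - u) =
      ∫ t in Ioi 0, S t * K (t - u) := by
    have hK : Integrable fun t ↦ K (t - u) := hLK.integrable.comp_sub_right u
    have hSK : Integrable fun t ↦ S t * K (t - u) := by
      simpa using (hLK.integrable_comp_add_mul hmono hS hSC u).comp_sub_right u
    simp_rw [sub_mul]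
    rw [integral_sub hSK.integrableOn (hK.const_mul A).integrableOn, integral_const_mul,
      sub_add_cancel]
  simpa using (hzero'.add (hLK.tendsto_setIntegral_Ioi.const_mul A)).congr hsplit

theorem tendsto_of_monotone_mul_exp_of_laplace
    (hmono : Monotone fun t ↦ S t * Real.exp t) (hS : ∀ t, 0 ≤ S t) (hSC : ∀ t, S t ≤ C)
    {A : ℝ} {G : ℂ → ℂ} (hG : ContinuousOn G {z | 0 ≤ z.re})
    (hGS : ∀ z : ℂ, 0 < z.re → ∫ t in Ioi (0 : ℝ), ((S t - A : ℝ) : ℂ) * cexp (-z * t) = G z) :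
    Tendsto S atTop (𝓝 A) := by
  have hCnn : 0 ≤ C := (hS 0).trans (hSC 0)
  have hsmall (φ : ℝ → ℝ) (hφ : ContinuousAt φ 0) : Tendsto φ (𝓝[>] 0) (𝓝 (φ 0)) :=
    hφ.tendsto.mono_left nhdsWithin_le_nhds
  refine tendsto_order.2 ⟨fun a ha ↦ ?_, fun a ha ↦ ?_⟩
  · have hlim : Tendsto (fun ε : ℝ ↦ Real.exp (2 * ε) * a + C * ε) (𝓝[>] 0) (𝓝 a) := by
      simpa using hsmall (fun ε : ℝ ↦ Real.exp (2 * ε) * a + C * ε) (by fun_prop)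
    obtain ⟨ε, hε, hεpos : 0 < ε⟩ :=
      ((hlim.eventually (gt_mem_nhds ha)).and self_mem_nhdsWithin).exists
    obtain ⟨L, K, hLK, htail⟩ := exists_bandLimitedKernel_concentrated hεpos hεpos
    have hconv := (hLK.tendsto_setIntegral_mul hmono hS hSC hG hGS).comp
      (tendsto_atTop_add_const_right atTop (-ε) tendsto_id)
    filter_upwards [hconv.eventually (lt_mem_nhds hε)] with u hu
    have hle := hLK.setIntegral_mul_le hmono hS hSC ε (u + -ε)
    rw [neg_add_cancel_right] at hle
    refine lt_of_mul_lt_mul_left ?_ (Real.exp_pos (2 * ε)).le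
    simp only [Function.comp_apply, id] at hu
    linarith [mul_le_mul_of_nonneg_left htail.le hCnn]
  · have hlim : Tendsto (fun ε : ℝ ↦ a * Real.exp (-(2 * ε)) * (1 - ε)) (𝓝[>] 0) (𝓝 a) := by
      simpa using hsmall (fun ε : ℝ ↦ a * Real.exp (-(2 * ε)) * (1 - ε)) (by fun_prop)
    obtain ⟨ε, hε, hεpos, hε1⟩ :=
      ((hlim.eventually (lt_mem_nhds ha)).and (Ioo_mem_nhdsGT one_pos)).exists
    obtain ⟨L, K, hLK, htail⟩ := exists_bandLimitedKernel_concentrated hεpos hεpos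
    have hconv := (hLK.tendsto_setIntegral_mul hmono hS hSC hG hGS).comp
      (tendsto_atTop_add_const_right atTop ε tendsto_id)
    filter_upwards [hconv.eventually (gt_mem_nhds hε), eventually_gt_atTop 0] with u hu hu0
    have hle := hLK.le_setIntegral_mul hmono hS hSC (show ε < u + ε by linarith)
    rw [add_sub_cancel_right] at hle
    have hexp := Real.exp_pos (-(2 * ε))
    refine lt_of_mul_lt_mul_right (a := Real.exp (-(2 * ε)) * (1 - ε)) ?_
      (mul_nonneg hexp.le (by linarith))
    have hbound : S u * Real.exp (-(2 * ε)) * (1 - ε) ≤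
        S u * Real.exp (-(2 * ε)) * (1 - ∫ t in {t : ℝ | ε < |t|}, K t) := by
      have := hS u
      gcongr
    simp only [Function.comp_apply, id] at hu
    linarith

end SlowlyDecreasing

end Tauberian

section WienerIkehara

open MeasureTheory Topology Complex
open Finset (Icc)

/-- The summatory function of `f` in the logarithmic variable: the sum of the `f k` over
`1 ≤ k ≤ eᵗ`, divided by `eᵗ`. -/
noncomputable def expMean (f : ℕ → ℝ) (t : ℝ) : ℝ :=
  (∑ k ∈ Icc 1 ⌊Real.exp t⌋₊, f k) * Real.exp (-t)

variable {f : ℕ → ℝ} {C : ℝ}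

lemma expMean_mul_exp (f : ℕ → ℝ) (t : ℝ) :
    expMean f t * Real.exp t = ∑ k ∈ Icc 1 ⌊Real.exp t⌋₊, f k := by
  rw [expMean, mul_assoc, ← Real.exp_add, neg_add_cancel, Real.exp_zero, mul_one]

lemma expMean_nonneg (hf : ∀ n, 0 ≤ f n) (t : ℝ) : 0 ≤ expMean f t :=
  mul_nonneg (Finset.sum_nonneg fun k _ ↦ hf k) (Real.exp_pos _).le

lemma expMean_le (hC : ∀ n : ℕ, ∑ k ∈ Icc 1 n, f k ≤ C * n) (hC0 : 0 ≤ C) (t : ℝ) :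
    expMean f t ≤ C := by
  refine le_of_mul_le_mul_right ?_ (Real.exp_pos t)
  rw [expMean_mul_exp]
  exact (hC _).trans (mul_le_mul_of_nonneg_left (Nat.floor_le (Real.exp_pos t).le) hC0)

lemma monotone_expMean_mul_exp (hf : ∀ n, 0 ≤ f n) :
    Monotone fun t ↦ expMean f t * Real.exp t := by
  intro s t hst
  simp only [expMean_mul_exp]
  exact Finset.sum_le_sum_of_subset_of_nonneg
    (Finset.Icc_subset_Icc_right (Nat.floor_le_floor (Real.exp_le_exp.2 hst))) fun k _ _ ↦ hf k

lemma LSeries_eq_mul_laplace_expMean (hf : ∀ n, 0 ≤ f n)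
    (hC : ∀ n : ℕ, ∑ k ∈ Icc 1 n, f k ≤ C * n) {z : ℂ} (hz : 0 < z.re) :
    LSeries (fun n ↦ f n) (1 + z) =
      (1 + z) * ∫ t in Set.Ioi (0 : ℝ), (expMean f t : ℂ) * cexp (-z * t) := by
  have hO : (fun n : ℕ ↦ ∑ k ∈ Icc 1 n, f k) =O[atTop] fun n ↦ (n : ℝ) ^ (1 : ℝ) :=
    Asymptotics.IsBigO.of_bound C (Eventually.of_forall fun n ↦ by
      simpa [abs_of_nonneg (Finset.sum_nonneg fun k _ ↦ hf k)] using hC n)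
  rw [LSeries_eq_mul_integral_of_nonneg f zero_le_one (by simpa using hz) hO hf, ← Real.exp_zero,
    ← integral_comp_exp_Ioi]
  congr 2 with t
  rw [expMean, cpow_def_of_ne_zero (by simp), ← ofReal_log (Real.exp_pos t).le, Real.log_exp,
    real_smul, mul_left_comm, ofReal_mul, ofReal_sum, mul_assoc]
  congr 1
  rw [ofReal_exp, ofReal_exp, ← Complex.exp_add, ← Complex.exp_add]
  congr 1
  push_cast
  ring

lemma laplace_expMean_sub (hf : ∀ n, 0 ≤ f n) (hC : ∀ n : ℕ, ∑ k ∈ Icc 1 n, f k ≤ C * n)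
    (hC0 : 0 ≤ C) (A : ℝ) {z : ℂ} (hz : 0 < z.re) :
    ∫ t in Set.Ioi (0 : ℝ), ((expMean f t - A : ℝ) : ℂ) * cexp (-z * t) =
      (LSeries (fun n ↦ f n) (1 + z) - A / z - A) / (1 + z) := by
  have hz0 : z ≠ 0 := fun h ↦ by simp [h] at hz
  have hz1 : 1 + z ≠ 0 := fun h ↦ by
    have := congrArg re h
    simp only [add_re, one_re, zero_re] at this
    linarith
  have hexp : IntegrableOn (fun t : ℝ ↦ cexp (-z * t)) (Set.Ioi 0) :=
    integrableOn_exp_mul_complex_Ioi (by simpa using hz) 0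
  have hmeas := measurable_of_monotone_mul_exp (monotone_expMean_mul_exp hf)
  have hInt : IntegrableOn (fun t : ℝ ↦ (expMean f t : ℂ) * cexp (-z * t)) (Set.Ioi 0) := by
    refine hexp.bdd_mul (c := C) (Measurable.aestronglyMeasurable (by fun_prop))
      (ae_of_all _ fun t ↦ ?_)
    rw [norm_real, Real.norm_of_nonneg (expMean_nonneg hf t)]
    exact expMean_le hC hC0 t
  simp_rw [ofReal_sub, sub_mul]
  rw [integral_sub hInt (hexp.const_mul _), integral_const_mul,
    integral_exp_mul_complex_Ioi (by simpa using hz), LSeries_eq_mul_laplace_expMean hf hC hz]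
  simp
  field_simp
  ring

theorem wienerIkehara_tendsto_sum_div (hf : ∀ n, 0 ≤ f n)
    (hC : ∀ n : ℕ, ∑ k ∈ Icc 1 n, f k ≤ C * n) {A : ℝ} {F : ℂ → ℂ}
    (hF : ContinuousOn F {s | 1 ≤ s.re})
    (hFf : ∀ s : ℂ, 1 < s.re → F s = LSeries (fun n ↦ f n) s - A / (s - 1)) :
    Tendsto (fun x : ℝ ↦ (∑ k ∈ Icc 1 ⌊x⌋₊, f k) / x) atTop (𝓝 A) := by
  have hC0 : 0 ≤ C := by simpa using (hf 1).trans (by simpa using hC 1)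
  have hG : ContinuousOn (fun z ↦ (F (1 + z) - A) / (1 + z)) {z | 0 ≤ z.re} := by
    refine ((hF.comp (by fun_prop) fun z hz ↦ ?_).sub continuousOn_const).div (by fun_prop)
      fun z hz h ↦ ?_
    · simpa using hz
    · have hre := congrArg re h
      simp only [add_re, one_re, zero_re] at hre
      linarith [show 0 ≤ z.re from hz]
  have hlaplace (z : ℂ) (hz : 0 < z.re) :
      ∫ t in Set.Ioi (0 : ℝ), ((expMean f t - A : ℝ) : ℂ) * cexp (-z * t) =
        (F (1 + z) - A) / (1 + z) := by
    rw [laplace_expMean_sub hf hC hC0 A hz, hFf _ (by simpa using hz), add_sub_cancel_left]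
  refine ((tendsto_of_monotone_mul_exp_of_laplace (monotone_expMean_mul_exp hf) (expMean_nonneg hf)
    (expMean_le hC hC0) hG hlaplace).comp Real.tendsto_log_atTop).congr' ?_
  filter_upwards [eventually_gt_atTop 0] with x hx
  rw [Function.comp_apply, expMean, Real.exp_neg, Real.exp_log hx, div_eq_mul_inv]

end WienerIkehara

section PrimesInProgressions

open Topology ArithmeticFunction ArithmeticFunction.vonMangoldt
open Finset (Icc)

/-- `f` has mean `A` over the primes, where `p` is counted with weight `log p`; the total weight
`∑ log p` of the primes up to `N` is replaced by the asymptotically equal `N`. -/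
def HasLogPrimeMean (f : ℕ → ℝ) (A : ℝ) : Prop :=
  Tendsto (fun N : ℕ ↦ (∑ p ∈ Nat.primesLE N, f p * Real.log p) / N) atTop (𝓝 A)

lemma sum_Icc_residueClass_le {q : ℕ} (a : ZMod q) (n : ℕ) :
    ∑ k ∈ Icc 1 n, residueClass a k ≤ (Real.log 4 + 4) * n := by
  refine (Finset.sum_le_sum fun k _ ↦ residueClass_le a k).trans ?_
  simpa [Chebyshev.psi, ← Finset.Icc_add_one_left_eq_Ioc] using
    Chebyshev.psi_le_const_mul_self n.cast_nonneg

lemma tendsto_sum_residueClass_div {q : ℕ} [NeZero q] {a : ZMod q} (ha : IsUnit a) :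
    Tendsto (fun x : ℝ ↦ (∑ k ∈ Icc 1 ⌊x⌋₊, residueClass a k) / x) atTop
      (𝓝 (q.totient : ℝ)⁻¹) :=
  wienerIkehara_tendsto_sum_div (residueClass_nonneg a) (sum_Icc_residueClass_le a)
    (continuousOn_LFunctionResidueClassAux a) fun s hs ↦ by
      simpa using eqOn_LFunctionResidueClassAux ha hs

lemma sum_Icc_sub_sum_primesLE_le {f : ℕ → ℝ} (hf : ∀ n, f n ≤ vonMangoldt n) (N : ℕ) :
    ∑ k ∈ Icc 1 N, f k - ∑ p ∈ Nat.primesLE N, f p ≤ Chebyshev.psi N - Chebyshev.theta N := by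
  rw [Chebyshev.psi_sub_theta_eq_sum_not_prime, Nat.floor_natCast, Nat.primesLE_eq_filter_Icc_one,
    sub_le_iff_le_add', ← Finset.Icc_add_one_left_eq_Ioc, zero_add,
    ← Finset.sum_filter_add_sum_filter_not (Icc 1 N) Nat.Prime f]
  gcongr
  exact hf _

lemma tendsto_sum_primesLE_div_of_le_vonMangoldt {f : ℕ → ℝ} (hf0 : ∀ n, 0 ≤ f n)
    (hf : ∀ n, f n ≤ vonMangoldt n) {A : ℝ}
    (hA : Tendsto (fun x : ℝ ↦ (∑ k ∈ Icc 1 ⌊x⌋₊, f k) / x) atTop (𝓝 A)) :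
    Tendsto (fun N : ℕ ↦ (∑ p ∈ Nat.primesLE N, f p) / N) atTop (𝓝 A) := by
  obtain ⟨C, hC⟩ := Chebyshev.psi_sub_theta_le_mul_sqrt
  have hsqrt : Tendsto (fun N : ℕ ↦ C * √N / N) atTop (𝓝 0) := by
    simpa only [mul_div_assoc, Real.sqrt_div_self, ← div_eq_mul_inv, Function.comp_apply]
      using
      (Real.tendsto_sqrt_atTop.comp tendsto_natCast_atTop_atTop).const_div_atTop C
  have hmean : Tendsto (fun N : ℕ ↦ (∑ k ∈ Icc 1 N, f k) / N) atTop (𝓝 A) :=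
    (hA.comp tendsto_natCast_atTop_atTop).congr fun N ↦ by
      rw [Function.comp_apply, Nat.floor_natCast]
  have hdiff : Tendsto (fun N : ℕ ↦ (∑ k ∈ Icc 1 N, f k) / N -
      (∑ p ∈ Nat.primesLE N, f p) / N) atTop (𝓝 0) := by
    refine squeeze_zero (fun N ↦ ?_) (fun N ↦ ?_) hsqrt
    · rw [← sub_div, Nat.primesLE_eq_filter_Icc_one]
      exact div_nonneg (sub_nonneg.2 (Finset.sum_le_sum_of_subset_of_nonneg
        (Finset.filter_subset _ _) fun n _ _ ↦ hf0 n)) N.cast_nonneg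
    · rw [← sub_div]
      gcongr
      exact (sum_Icc_sub_sum_primesLE_le hf N).trans (hC N)
  simpa using hmean.sub hdiff

lemma residueClass_apply_prime {q p : ℕ} (a : ZMod q) (hp : p.Prime) :
    residueClass a p = (if (p : ZMod q) = a then 1 else 0) * Real.log p := by
  simp [residueClass, Set.indicator_apply, vonMangoldt_apply_prime hp]

theorem hasLogPrimeMean_residueClass {q : ℕ} [NeZero q] {a : ZMod q} (ha : IsUnit a) :
    HasLogPrimeMean (fun p ↦ if (p : ZMod q) = a then 1 else 0) (q.totient : ℝ)⁻¹ := by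
  refine (tendsto_sum_primesLE_div_of_le_vonMangoldt (residueClass_nonneg a) (residueClass_le a)
    (tendsto_sum_residueClass_div ha)).congr fun N ↦ ?_
  congr 1
  exact Finset.sum_congr rfl fun p hp ↦
    residueClass_apply_prime a (Nat.prime_of_mem_primesLE hp)

end PrimesInProgressions

section BrunTitchmarsh

open Finset (range)
open scoped Nat

lemma dvd_prod_range_mul_add {q B M : ℕ} (hqB : q.Coprime B) (hB : B ∣ M !) (a : ℕ) :
    B ∣ ∏ m ∈ range M, (q * m + a) := by
  have : NeZero B := ⟨ne_zero_of_dvd_ne_zero M.factorial_ne_zero hB⟩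
  set c : ℕ := ((q : ZMod B)⁻¹ * a).val
  have hc : (q : ZMod B) * c = a := by
    rw [ZMod.natCast_zmod_val, ← mul_assoc, ZMod.coe_mul_inv_eq_one q hqB, one_mul]
  have hprod : ((∏ m ∈ range M, (q * m + a) : ℕ) : ZMod B) =
      ((q ^ M * c.ascFactorial M : ℕ) : ZMod B) := by
    rw [Nat.ascFactorial_eq_prod_range]
    nth_rewrite 2 [← Finset.card_range M]
    rw [Finset.pow_card_mul_prod]
    push_cast
    simp_rw [mul_add, hc, add_comm]
  rw [← ZMod.natCast_eq_zero_iff, hprod, ZMod.natCast_eq_zero_iff]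
  exact (hB.trans (Nat.factorial_dvd_ascFactorial c M)).mul_left _

lemma factorial_le_pow_mul_ordCompl {q : ℕ} (hq : q.Prime) (M : ℕ) :
    M ! ≤ q ^ M * ordCompl[q] M ! := by
  have : Fact q.Prime := ⟨hq⟩
  conv_lhs => rw [← Nat.ordProj_mul_ordCompl_eq_self M ! q]
  rw [Nat.factorization_def _ hq]
  gcongr
  · exact hq.one_le
  · exact padicValNat_factorial_le _ M

lemma prod_range_mul_add_one_le {q : ℕ} (hq : 1 ≤ q) (M : ℕ) :
    ∏ m ∈ range M, (q * m + 1) ≤ q ^ M * M ! := by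
  nth_rewrite 2 [← Finset.card_range M]
  rw [← Finset.prod_range_add_one_eq_factorial, Finset.pow_card_mul_prod]
  exact Finset.prod_le_prod' fun m _ ↦ by rw [mul_add_one]; gcongr

/-- The prime-to-`q` part of `M!` divides `∏ (q m + 1)` over `m < M`, and it is coprime to the
primes above `M`; what remains for those is at most `q ^ (2 M)`. -/
lemma prod_primes_le_pow {q : ℕ} (hq : q.Prime) {M : ℕ} {S : Finset ℕ}
    (hS : ∀ p ∈ S, p.Prime ∧ M < p ∧ ∃ m < M, p = q * m + 1) : ∏ p ∈ S, p ≤ q ^ (2 * M) := by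
  set P := ∏ m ∈ range M, (q * m + 1)
  set B := ordCompl[q] M !
  have hBM : B ∣ M ! := Nat.ordCompl_dvd _ _
  have hB : 0 < B := Nat.pos_of_dvd_of_pos hBM M.factorial_pos
  have hBP : B ∣ P :=
    dvd_prod_range_mul_add (Nat.coprime_ordCompl hq M.factorial_ne_zero) hBM 1
  have hSP : ∏ p ∈ S, p ∣ P := by
    refine Finset.prod_primes_dvd P (fun p hp ↦ (hS p hp).1.prime) fun p hp ↦ ?_
    obtain ⟨-, -, m, hm, rfl⟩ := hS p hp
    exact Finset.dvd_prod_of_mem _ (Finset.mem_range.2 hm)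
  have hcop : B.Coprime (∏ p ∈ S, p) := by
    refine Nat.Coprime.prod_right fun p hp ↦ Nat.Coprime.coprime_dvd_left hBM ?_
    exact ((hS p hp).1.coprime_factorial_of_lt (hS p hp).2.1).symm
  refine Nat.le_of_mul_le_mul_left ?_ hB
  calc B * ∏ p ∈ S, p ≤ P :=
        Nat.le_of_dvd (Finset.prod_pos fun m _ ↦ by lia) (hcop.mul_dvd_of_dvd_of_dvd hBP hSP)
    _ ≤ q ^ M * M ! := prod_range_mul_add_one_le hq.one_le M
    _ ≤ q ^ M * (q ^ M * B) := by gcongr; exact factorial_le_pow_mul_ordCompl hq M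
    _ = B * q ^ (2 * M) := by ring

lemma sum_log_primes_le {q : ℕ} (hq : q.Prime) {M : ℕ} {S : Finset ℕ}
    (hS : ∀ p ∈ S, p.Prime ∧ M < p ∧ ∃ m < M, p = q * m + 1) :
    ∑ p ∈ S, Real.log p ≤ 2 * M * Real.log q := by
  have hpos : 0 < ∏ p ∈ S, p := Finset.prod_pos fun p hp ↦ (hS p hp).1.pos
  have := Real.log_le_log (mod_cast hpos)
    (show ((∏ p ∈ S, p : ℕ) : ℝ) ≤ ((q ^ (2 * M) : ℕ) : ℝ) from mod_cast prod_primes_le_pow hq hS)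
  push_cast at this
  rwa [Real.log_prod fun p hp ↦ mod_cast (hS p hp).1.ne_zero, Real.log_pow, Nat.cast_mul,
    Nat.cast_two] at this

lemma sum_log_primesLE_le_two_mul_mul_log {q : ℕ} (hq : 2 ≤ q) (M : ℕ) :
    ∑ p ∈ Nat.primesLE M, Real.log p ≤ 2 * M * Real.log q := by
  have hlog : Real.log 2 ≤ Real.log q := Real.log_le_log two_pos (mod_cast hq)
  have htheta := Chebyshev.theta_le_log4_mul_x (Nat.cast_nonneg (α := ℝ) M)
  rw [Chebyshev.theta_eq_sum_primesLE_log] at htheta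
  refine htheta.trans ?_
  rw [show (4 : ℝ) = 2 ^ 2 by norm_num, Real.log_pow, Nat.cast_two, mul_right_comm]
  gcongr

lemma sum_log_primesLE_dvd_pred_le {q : ℕ} (hq : q.Prime) (N : ℕ) :
    ∑ p ∈ Nat.primesLE N with q ∣ p - 1, Real.log p ≤ 8 * N * (Real.log q / q) := by
  have hq0 : (0 : ℝ) < q := mod_cast hq.pos
  rcases lt_or_ge N q with hNq | hqN
  · rw [Finset.sum_eq_zero fun p hp ↦ ?_]
    · have := Real.log_natCast_nonneg q
      positivity
    · rw [Finset.mem_filter, Nat.mem_primesLE] at hp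
      have := Nat.le_of_dvd (Nat.sub_pos_of_lt hp.1.2.one_lt) hp.2
      lia
  set M := (N - 1) / q + 1
  have hMN : (M : ℝ) ≤ 2 * N / q := by
    rw [le_div_iff₀ hq0]
    have := Nat.div_mul_le_self (N - 1) q
    exact_mod_cast show M * q ≤ 2 * N by rw [add_one_mul]; lia
  have hlarge : ∑ p ∈ Nat.primesLE N with q ∣ p - 1 ∧ M < p, Real.log p ≤
      2 * M * Real.log q := by
    refine sum_log_primes_le hq fun p hp ↦ ?_
    simp only [Finset.mem_filter, Nat.mem_primesLE] at hp
    obtain ⟨⟨hpN, hp⟩, hqp, hMp⟩ := hp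
    refine ⟨hp, hMp, (p - 1) / q, Nat.lt_succ_of_le (Nat.div_le_div_right (by lia)), ?_⟩
    rw [Nat.mul_div_cancel' hqp, Nat.sub_add_cancel hp.one_le]
  calc ∑ p ∈ Nat.primesLE N with q ∣ p - 1, Real.log p
    _ ≤ ∑ p ∈ Nat.primesLE N with q ∣ p - 1 ∧ M < p, Real.log p +
          ∑ p ∈ Nat.primesLE M, Real.log p := by
      rw [← Finset.sum_filter_add_sum_filter_not _ (M < ·), Finset.filter_filter]
      gcongr
      intro p hp
      simp only [Finset.mem_filter, Nat.mem_primesLE, not_lt] at hp ⊢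
      exact ⟨hp.2, hp.1.1.2⟩
    _ ≤ 4 * Real.log q * M := by linarith [sum_log_primesLE_le_two_mul_mul_log hq.two_le M]
    _ ≤ 4 * Real.log q * (2 * N / q) := by gcongr
    _ = 8 * N * (Real.log q / q) := by ring

lemma summable_log_div_sq : Summable fun n : ℕ ↦ Real.log n / (n : ℝ) ^ 2 := by
  refine summable_of_isBigO_nat (Real.summable_nat_rpow.2 (show (-(3 / 2) : ℝ) < -1 by norm_num))
    (((isLittleO_log_rpow_atTop (half_pos one_pos)).isBigO.mul
      (Asymptotics.isBigO_refl (fun x : ℝ ↦ (x ^ 2)⁻¹) atTop)).comp_tendsto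
        tendsto_natCast_atTop_atTop |>.congr' (.of_forall fun n ↦ rfl) ?_)
  filter_upwards [eventually_gt_atTop 0] with n hn
  have hn' : (0 : ℝ) < n := mod_cast hn
  rw [Function.comp_apply, ← Real.rpow_natCast, ← Real.rpow_neg hn'.le, ← Real.rpow_add hn']
  norm_num

lemma sum_primesLE_sum_primeFactors_pred (N Y : ℕ) (a b : ℕ → ℝ) :
    ∑ p ∈ Nat.primesLE N, (∑ q ∈ (p - 1).primeFactors with Y < q, a q) * b p =
      ∑ q ∈ Nat.primesLE N with Y < q, a q * ∑ p ∈ Nat.primesLE N with q ∣ p - 1, b p := by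
  simp_rw [Finset.sum_mul, Finset.mul_sum]
  refine Finset.sum_comm' fun p q ↦ ?_
  simp only [Finset.mem_filter, Nat.mem_primesLE, Nat.mem_primeFactors]
  constructor
  · rintro ⟨⟨hpN, hp⟩, ⟨hq, hqp, hp1⟩, hYq⟩
    have := Nat.le_of_dvd (Nat.pos_of_ne_zero hp1) hqp
    exact ⟨⟨⟨hpN, hp⟩, hqp⟩, ⟨by lia, hq⟩, hYq⟩
  · rintro ⟨⟨⟨hpN, hp⟩, hqp⟩, ⟨-, hq⟩, hYq⟩
    exact ⟨⟨hpN, hp⟩, ⟨hq, hqp, (Nat.sub_pos_of_lt hp.one_lt).ne'⟩, hYq⟩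

lemma eventually_sum_large_primeFactors_le {ε : ℝ} (hε : 0 < ε) : ∀ᶠ Y in atTop, ∀ N : ℕ,
    ∑ p ∈ Nat.primesLE N, (∑ q ∈ (p - 1).primeFactors with Y < q, (q : ℝ)⁻¹) * Real.log p ≤
      ε * N := by
  obtain ⟨s, hs⟩ := summable_iff_vanishing_norm.1 summable_log_div_sq (ε / 8) (by positivity)
  filter_upwards [eventually_ge_atTop (s.sup id)] with Y hY N
  have hdisj : Disjoint (Nat.primesLE N |>.filter (Y < ·)) s :=
    Finset.disjoint_left.2 fun q hq hqs ↦
      ((Finset.le_sup (f := id) hqs).trans hY).not_gt (Finset.mem_filter.1 hq).2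
  rw [sum_primesLE_sum_primeFactors_pred]
  calc ∑ q ∈ Nat.primesLE N with Y < q,
        (q : ℝ)⁻¹ * ∑ p ∈ Nat.primesLE N with q ∣ p - 1, Real.log p
    _ ≤ ∑ q ∈ Nat.primesLE N with Y < q, 8 * N * (Real.log q / (q : ℝ) ^ 2) := by
      refine Finset.sum_le_sum fun q hq ↦ ?_
      have hq := Nat.prime_of_mem_primesLE (Finset.mem_filter.1 hq).1
      calc _ ≤ (q : ℝ)⁻¹ * (8 * N * (Real.log q / q)) := by
            gcongr
            exact sum_log_primesLE_dvd_pred_le hq N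
        _ = 8 * N * (Real.log q / (q : ℝ) ^ 2) := by ring
    _ ≤ 8 * N * (ε / 8) := by
      rw [← Finset.mul_sum]
      gcongr
      exact (le_abs_self _).trans (hs _ hdisj).le
    _ = ε * N := by ring

end BrunTitchmarsh

section LogPrimeMean

open Topology
open Finset (range)

lemma abs_sum_primesLE_mul_log_sub_le {f : ℕ → ℝ} {C : ℝ}
    (hf : ∀ p, p.Prime → |f p| ≤ C) (N : ℕ) :
    |(∑ p ∈ Nat.primesLE N, f p) * Real.log N - ∑ p ∈ Nat.primesLE N, f p * Real.log p| ≤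
      C * ((Nat.primeCounting N : ℝ) * Real.log N - Chebyshev.theta N) := by
  rw [Chebyshev.theta_eq_sum_primesLE_log, ← Nat.primesLE_card_eq_primeCounting, ← nsmul_eq_mul,
    ← Finset.sum_const, ← Finset.sum_sub_distrib, Finset.sum_mul, ← Finset.sum_sub_distrib,
    Finset.mul_sum]
  refine Finset.abs_sum_le_sum_abs _ _ |>.trans (Finset.sum_le_sum fun p hp ↦ ?_)
  obtain ⟨hpN, hp⟩ := Nat.mem_primesLE.1 hp
  have hlog : Real.log p ≤ Real.log N :=
    Real.log_le_log (mod_cast hp.pos) (mod_cast hpN)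
  rw [← mul_sub, abs_mul, abs_of_nonneg (sub_nonneg.2 hlog)]
  exact mul_le_mul_of_nonneg_right (hf p hp) (sub_nonneg.2 hlog)

lemma tendsto_primeCounting_mul_log_sub_theta_div :
    Tendsto (fun N : ℕ ↦ ((Nat.primeCounting N : ℝ) * Real.log N - Chebyshev.theta N) / N)
      atTop (𝓝 0) := by
  have hinv : Tendsto (fun x : ℝ ↦ x / Real.log x ^ 2 * (Real.log x / x)) atTop (𝓝 0) := by
    refine Real.tendsto_log_atTop.inv_tendsto_atTop.congr' ?_
    filter_upwards [eventually_gt_atTop 1] with x hx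
    have hlog := Real.log_pos hx
    rw [Pi.inv_apply]
    field_simp
  refine (((Chebyshev.primeCounting_sub_theta_div_log_isBigO.mul
    (Asymptotics.isBigO_refl (fun x ↦ Real.log x / x) atTop)).trans_tendsto hinv).comp
      tendsto_natCast_atTop_atTop).congr' ?_
  filter_upwards [eventually_gt_atTop 1] with N hN
  have hlog : 0 < Real.log N := Real.log_pos (mod_cast hN)
  rw [Function.comp_apply, Nat.floor_natCast]
  field_simp

lemma sum_range_nth_prime (f : ℕ → ℝ) (N : ℕ) :
    ∑ i ∈ range N, f (Nat.nth Nat.Prime i) = ∑ p ∈ (Nat.nth Nat.Prime N).primesBelow, f p := by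
  have hmono := Nat.nth_strictMono Nat.infinite_setOfPred_prime
  refine Finset.sum_bij (fun i _ ↦ Nat.nth Nat.Prime i) (fun i hi ↦ ?_)
    (fun i _ j _ hij ↦ hmono.injective hij) (fun p hp ↦ ?_) fun _ _ ↦ rfl
  · exact Nat.mem_primesBelow.2 ⟨hmono (Finset.mem_range.1 hi), Nat.prime_nth_prime i⟩
  · obtain ⟨hpN, hp⟩ := Nat.mem_primesBelow.1 hp
    refine ⟨Nat.count Nat.Prime p, ?_, Nat.nth_count hp⟩
    rwa [Finset.mem_range, ← hmono.lt_iff_lt, Nat.nth_count hp]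

namespace HasLogPrimeMean

variable {f g : ℕ → ℝ} {A B C : ℝ}

lemma const_mul (hf : HasLogPrimeMean f A) (c : ℝ) :
    HasLogPrimeMean (fun p ↦ c * f p) (c * A) := by
  refine (Tendsto.const_mul c hf).congr fun N ↦ ?_
  simp_rw [mul_assoc, ← Finset.mul_sum, mul_div_assoc]

lemma sum {ι : Type*} {s : Finset ι} {f : ι → ℕ → ℝ} {A : ι → ℝ}
    (hf : ∀ i ∈ s, HasLogPrimeMean (f i) (A i)) :
    HasLogPrimeMean (fun p ↦ ∑ i ∈ s, f i p) (∑ i ∈ s, A i) := by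
  refine (tendsto_finsetSum s hf).congr fun N ↦ ?_
  simp_rw [Finset.sum_mul]
  rw [Finset.sum_comm, Finset.sum_div]

lemma congr_eventually (hf : HasLogPrimeMean f A)
    (hfg : ∀ᶠ p in atTop, p.Prime → f p = g p) : HasLogPrimeMean g A := by
  obtain ⟨K, hK⟩ := eventually_atTop.1 hfg
  have hdiff : Tendsto (fun N : ℕ ↦
      (∑ p ∈ Nat.primesLE K, (g p - f p) * Real.log p) / N) atTop (𝓝 0) :=
    tendsto_const_nhds.div_atTop tendsto_natCast_atTop_atTop
  rw [← add_zero A]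
  refine (Tendsto.add hf hdiff).congr' ?_
  filter_upwards [eventually_ge_atTop K] with N hKN
  have hsum : ∑ p ∈ Nat.primesLE K, (g p - f p) * Real.log p =
      ∑ p ∈ Nat.primesLE N, (g p - f p) * Real.log p := by
    refine Finset.sum_subset (Nat.primesLE_mono hKN) fun p hpN hpK ↦ ?_
    have hp := Nat.prime_of_mem_primesLE hpN
    have hKp : K ≤ p := (not_le.1 fun h ↦ hpK (Nat.mem_primesLE.2 ⟨h, hp⟩)).le
    rw [hK p hKp hp, sub_self, zero_mul]
  rw [hsum, ← add_div, ← Finset.sum_add_distrib]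
  simp_rw [← add_mul, add_sub_cancel]

lemma of_tendsto {f : ℕ → ℕ → ℝ} {A : ℕ → ℝ}
    (hf : ∀ᶠ Y in atTop, HasLogPrimeMean (f Y) (A Y)) (hA : Tendsto A atTop (𝓝 B))
    (hfg : ∀ ε > 0, ∀ᶠ Y in atTop, ∀ N,
      ∑ p ∈ Nat.primesLE N, |f Y p - g p| * Real.log p ≤ ε * N) :
    HasLogPrimeMean g B := by
  refine TendstoUniformly.tendsto_of_eventually_tendsto
    (F := fun Y N ↦ (∑ p ∈ Nat.primesLE N, f Y p * Real.log p) / (N : ℝ)) ?_ hf hA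
  refine Metric.tendstoUniformly_iff.2 fun ε hε ↦ ?_
  filter_upwards [hfg (ε / 2) (half_pos hε)] with Y hY N
  refine lt_of_le_of_lt ?_ (half_lt_self hε)
  rw [dist_comm, Real.dist_eq, ← sub_div, ← Finset.sum_sub_distrib, abs_div, Nat.abs_cast]
  refine div_le_of_le_mul₀ N.cast_nonneg (half_pos hε).le
    ((Finset.abs_sum_le_sum_abs _ _).trans ((Finset.sum_le_sum fun p _ ↦ ?_).trans (hY N)))
  rw [← sub_mul, abs_mul, abs_of_nonneg (Real.log_natCast_nonneg p)]

lemma one : HasLogPrimeMean (fun _ ↦ 1) 1 := by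
  simpa [eq_iff_true_of_subsingleton] using
    hasLogPrimeMean_residueClass (q := 1) (a := 0) (isUnit_of_subsingleton 0)

lemma tendsto_sum_mul_log_div (hf : HasLogPrimeMean f A) (hC : ∀ p, p.Prime → |f p| ≤ C) :
    Tendsto (fun N : ℕ ↦ (∑ p ∈ Nat.primesLE N, f p) * Real.log N / N) atTop (𝓝 A) := by
  have hdiff : Tendsto (fun N : ℕ ↦ ((∑ p ∈ Nat.primesLE N, f p) * Real.log N -
      ∑ p ∈ Nat.primesLE N, f p * Real.log p) / N) atTop (𝓝 0) := by
    refine squeeze_zero_norm (fun N ↦ ?_)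
      (by simpa using tendsto_primeCounting_mul_log_sub_theta_div.const_mul C)
    rw [Real.norm_eq_abs, abs_div, Nat.abs_cast, ← mul_div_assoc]
    gcongr
    exact abs_sum_primesLE_mul_log_sub_le hC N
  simpa [← add_div] using Tendsto.add hf hdiff

lemma tendsto_sum_div_primeCounting (hf : HasLogPrimeMean f A) (hC : ∀ p, p.Prime → |f p| ≤ C) :
    Tendsto (fun N : ℕ ↦ (∑ p ∈ Nat.primesLE N, f p) / Nat.primeCounting N) atTop (𝓝 A) := by
  have hone := one.tendsto_sum_mul_log_div (C := 1) (by simp)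
  rw [← div_one A]
  refine ((hf.tendsto_sum_mul_log_div hC).div hone one_ne_zero).congr' ?_
  filter_upwards [eventually_gt_atTop 1] with N hN
  have hlog : Real.log N ≠ 0 := (Real.log_pos (mod_cast hN)).ne'
  have hN0 : (N : ℝ) ≠ 0 := by positivity
  simp only [Pi.div_apply, Finset.sum_const, Nat.primesLE_card_eq_primeCounting, nsmul_eq_mul,
    mul_one]
  field_simp

lemma tendsto_average_nth_prime (hf : HasLogPrimeMean f A) (hC : ∀ p, p.Prime → |f p| ≤ C) :
    Tendsto (fun N : ℕ ↦ 1 / (N : ℝ) * ∑ i ∈ range N, f (Nat.nth Nat.Prime i)) atTop (𝓝 A) := by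
  have hatTop : Tendsto (fun N ↦ Nat.nth Nat.Prime N - 1) atTop atTop :=
    (tendsto_sub_atTop_nat 1).comp
      (Nat.nth_strictMono Nat.infinite_setOfPred_prime).tendsto_atTop
  refine ((hf.tendsto_sum_div_primeCounting hC).comp hatTop).congr fun N ↦ ?_
  rw [sum_range_nth_prime, Function.comp_apply, ← Nat.primesLE_card_eq_primeCounting,
    ← Nat.primesBelow_eq_primesLE_sub_one, Nat.primesBelow_card_eq_primeCounting',
    Nat.primeCounting'_nth_eq, one_div_mul_eq_div]

end HasLogPrimeMean

end LogPrimeMean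

section ReducedMean

/-- `f` is periodic modulo `n ≠ 0` and `c` is its mean value over the reduced residue classes. -/
def HasReducedMean (n : ℕ) (f : ℕ → ℝ) (c : ℝ) : Prop :=
  ∃ (_ : NeZero n) (F : ZMod n → ℝ), (∀ k : ℕ, f k = F k) ∧
    ∑ u : (ZMod n)ˣ, F u = c * n.totient

namespace HasReducedMean

variable {n m : ℕ} {f g : ℕ → ℝ} {c d : ℝ}

lemma const (n : ℕ) [NeZero n] (c : ℝ) : HasReducedMean n (fun _ ↦ c) c :=
  ⟨inferInstance, fun _ ↦ c, fun _ ↦ rfl, by simp [mul_comm]⟩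

lemma sub (hf : HasReducedMean n f c) (hg : HasReducedMean n g d) :
    HasReducedMean n (fun k ↦ f k - g k) (c - d) := by
  obtain ⟨_, F, hF, hFsum⟩ := hf
  obtain ⟨_, G, hG, hGsum⟩ := hg
  exact ⟨inferInstance, fun x ↦ F x - G x, fun k ↦ by simp only [hF, hG],
    by rw [Finset.sum_sub_distrib, hFsum, hGsum, sub_mul]⟩

lemma const_mul (hf : HasReducedMean n f c) (a : ℝ) :
    HasReducedMean n (fun k ↦ a * f k) (a * c) := by
  obtain ⟨_, F, hF, hsum⟩ := hf
  exact ⟨inferInstance, fun x ↦ a * F x, fun k ↦ by simp only [hF],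
    by rw [← Finset.mul_sum, hsum, mul_assoc]⟩

lemma mul (hnm : n.Coprime m) (hf : HasReducedMean n f c) (hg : HasReducedMean m g d) :
    HasReducedMean (n * m) (fun k ↦ f k * g k) (c * d) := by
  obtain ⟨_, F, hF, hFsum⟩ := hf
  obtain ⟨_, G, hG, hGsum⟩ := hg
  let e := ZMod.chineseRemainder hnm
  let eUnits : (ZMod (n * m))ˣ ≃* (ZMod n)ˣ × (ZMod m)ˣ :=
    (Units.mapEquiv e.toMulEquiv).trans MulEquiv.prodUnits
  refine ⟨inferInstance, fun x ↦ F (e x).1 * G (e x).2, fun k ↦ ?_, ?_⟩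
  · simp only [map_natCast, Prod.fst_natCast, Prod.snd_natCast, hF, hG]
  · calc ∑ u : (ZMod (n * m))ˣ, F (e u).1 * G (e u).2
      _ = ∑ v : (ZMod n)ˣ × (ZMod m)ˣ, F v.1 * G v.2 :=
        Fintype.sum_equiv eUnits.toEquiv _ _ fun _ ↦ rfl
      _ = (∑ u : (ZMod n)ˣ, F u) * ∑ v : (ZMod m)ˣ, G v := by
        rw [Finset.sum_mul_sum, Fintype.sum_prod_type]
      _ = c * d * (n * m).totient := by
        rw [hFsum, hGsum, Nat.totient_mul hnm, Nat.cast_mul, mul_mul_mul_comm]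

lemma prod {s : Finset ℕ} (hs : ∀ q ∈ s, q.Prime) {f : ℕ → ℕ → ℝ} {c : ℕ → ℝ}
    (hf : ∀ q ∈ s, HasReducedMean q (f q) (c q)) :
    HasReducedMean (∏ q ∈ s, q) (fun k ↦ ∏ q ∈ s, f q k) (∏ q ∈ s, c q) := by
  induction s using Finset.induction_on with
  | empty => exact const 1 1
  | insert r s hr ih =>
    simp only [Finset.prod_insert hr]
    rw [Finset.forall_mem_insert] at hs hf
    refine mul (Nat.Coprime.prod_right fun q hq ↦ ?_) hf.1 (ih hs.2 hf.2)
    exact (Nat.coprime_primes hs.1 (hs.2 q hq)).2 fun hrq ↦ hr (hrq ▸ hq)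

lemma eq_one (n : ℕ) [NeZero n] :
    HasReducedMean n (fun k ↦ if (k : ZMod n) = 1 then 1 else 0) (n.totient : ℝ)⁻¹ := by
  refine ⟨inferInstance, fun x ↦ if x = 1 then 1 else 0, fun _ ↦ rfl, ?_⟩
  simp only [Units.val_eq_one, Finset.sum_ite_eq', Finset.mem_univ, if_true]
  rw [inv_mul_cancel₀ (Nat.cast_ne_zero.2 (Nat.totient_pos.2 (NeZero.pos n)).ne')]

lemma mulChar [NeZero n] {χ : MulChar (ZMod n) ℤ} (hχ : χ ≠ 1) :
    HasReducedMean n (fun k ↦ (χ k : ℝ)) 0 := by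
  refine ⟨inferInstance, fun x ↦ (χ x : ℝ), fun _ ↦ rfl, ?_⟩
  have hne : (χ : ZMod n →* ℤ).comp (Units.coeHom (ZMod n)) ≠ 1 := fun h ↦
    hχ (MulChar.ext fun u ↦ by simpa using DFunLike.congr_fun h u)
  rw [zero_mul, ← Int.cast_sum]
  exact_mod_cast sum_hom_units_eq_zero _ hne

protected lemma hasLogPrimeMean (hf : HasReducedMean n f c) : HasLogPrimeMean f c := by
  obtain ⟨_, F, hF, hsum⟩ := hf
  have hmean := HasLogPrimeMean.sum (s := Finset.univ) fun (u : (ZMod n)ˣ) _ ↦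
    (hasLogPrimeMean_residueClass u.isUnit).const_mul (F u)
  rw [← Finset.sum_mul, hsum, mul_inv_cancel_right₀
    (Nat.cast_ne_zero.2 (Nat.totient_pos.2 (NeZero.pos n)).ne')] at hmean
  refine hmean.congr_eventually ?_
  filter_upwards [eventually_gt_atTop n] with p hnp hp
  have hpn : p.Coprime n :=
    hp.coprime_iff_not_dvd.2 fun h ↦ (Nat.le_of_dvd (NeZero.pos n) h).not_gt hnp
  rw [hF p, ← ZMod.coe_unitOfCoprime p hpn]
  simp only [Units.val_inj, mul_ite, mul_one, mul_zero, Finset.sum_ite_eq, Finset.mem_univ,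
    if_true]

lemma one_sub_mul_eq_one {q : ℕ} (hq : q.Prime) (c : ℝ) :
    HasReducedMean q (fun k ↦ 1 - c * if (k : ZMod q) = 1 then 1 else 0) (1 - c / (q - 1)) := by
  have := NeZero.mk hq.ne_zero
  have hmean := (const q 1).sub ((eq_one q).const_mul c)
  rwa [Nat.totient_prime hq, Nat.cast_pred hq.pos, ← div_eq_mul_inv] at hmean

lemma one_sub_mul_eq_one_mul_jacobiSym {q : ℕ} (hq : q.Prime) (hq2 : q ≠ 2) (c : ℝ) :
    HasReducedMean q (fun k ↦ (1 - c * if (k : ZMod q) = 1 then 1 else 0) * (jacobiSym k q : ℝ))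
      (-(c / (q - 1))) := by
  have := Fact.mk hq
  have := NeZero.mk hq.ne_zero
  have hmean := (mulChar (quadraticChar_ne_one (F := ZMod q) (by rwa [ZMod.ringChar_zmod_n]))).sub
    ((eq_one q).const_mul c)
  rw [Nat.totient_prime hq, Nat.cast_pred hq.pos, ← div_eq_mul_inv, zero_sub] at hmean
  convert hmean using 2 with k
  rw [← jacobiSym.legendreSym.to_jacobiSym, legendreSym, Int.cast_natCast]
  by_cases hk : (k : ZMod q) = 1 <;> simp [hk]

end HasReducedMean

end ReducedMean

section Reciprocity

lemma jacobiSym_prod_right (a : ℤ) {s : Finset ℕ} (hs : ∀ q ∈ s, q ≠ 0) :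
    jacobiSym a (∏ q ∈ s, q) = ∏ q ∈ s, jacobiSym a q := by
  induction s using Finset.induction_on with
  | empty => simp
  | insert r s hr ih =>
    rw [Finset.forall_mem_insert] at hs
    rw [Finset.prod_insert hr, Finset.prod_insert hr, ← ih hs.2,
      jacobiSym.mul_right' a hs.1 (Finset.prod_ne_zero_iff.2 hs.2)]

lemma chi_four_eq_one_or_neg_one {m : ℕ} (hm : Odd m) :
    (m % 4 = 1 ∧ ZMod.χ₄ m = 1) ∨ (m % 4 = 3 ∧ ZMod.χ₄ m = -1) :=
  (Nat.odd_mod_four_iff.1 (Nat.odd_iff.1 hm)).imp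
    (fun h ↦ ⟨h, ZMod.χ₄_nat_one_mod_four h⟩) fun h ↦ ⟨h, ZMod.χ₄_nat_three_mod_four h⟩

lemma chi_four_mul_self_emod_four {m : ℕ} (hm : Odd m) : (ZMod.χ₄ m * m : ℤ) % 4 = 1 := by
  rcases chi_four_eq_one_or_neg_one hm with ⟨h, hχ⟩ | ⟨h, hχ⟩ <;> rw [hχ] <;> omega

lemma jacobiSym_chi_four_mul_self {m p : ℕ} (hm : Odd m) (hp : Odd p) :
    jacobiSym (ZMod.χ₄ m * m) p = jacobiSym p m := by
  rw [jacobiSym.mul_left]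
  rcases chi_four_eq_one_or_neg_one hm with ⟨hm4, hχ⟩ | ⟨hm4, hχ⟩
  · rw [hχ, jacobiSym.one_left, one_mul, jacobiSym.quadratic_reciprocity_one_mod_four hm4 hp]
  rw [hχ, jacobiSym.at_neg_one hp]
  rcases chi_four_eq_one_or_neg_one hp with ⟨hp4, hχp⟩ | ⟨hp4, hχp⟩
  · rw [hχp, one_mul, jacobiSym.quadratic_reciprocity_one_mod_four hp4 hm]
  · rw [hχp, jacobiSym.quadratic_reciprocity_three_mod_four hm4 hp4, neg_one_mul, neg_neg]

lemma natAbs_eq_or_eq_two_mul_prod_primeFactors {g : ℤ} (hg : Squarefree g) :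
    g.natAbs = ∏ q ∈ g.natAbs.primeFactors.erase 2, q ∨
      g.natAbs = 2 * ∏ q ∈ g.natAbs.primeFactors.erase 2, q := by
  have hprod := Nat.prod_primeFactors_of_squarefree (Int.squarefree_natAbs.2 hg)
  by_cases h2 : 2 ∈ g.natAbs.primeFactors
  · exact .inr ((Finset.mul_prod_erase _ (fun q ↦ q) h2).trans hprod).symm
  · exact .inl (by rw [Finset.erase_eq_of_notMem h2, hprod])

lemma exists_eq_mul_chi_four_mul_self {g : ℤ} {m : ℕ} (hm : Odd m)
    (hgm : g.natAbs = m ∨ g.natAbs = 2 * m) :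
    ∃ u ∈ ({1, -1, 2, -2} : Finset ℤ), g = u * (ZMod.χ₄ m * m) := by
  simp only [Finset.mem_insert, Finset.mem_singleton, exists_eq_or_imp, exists_eq_left]
  rcases chi_four_eq_one_or_neg_one hm with ⟨-, hχ⟩ | ⟨-, hχ⟩ <;> rw [hχ] <;> omega

lemma exists_hasReducedMean_jacobiSym_left {u : ℤ} (hu : u ∈ ({1, -1, 2, -2} : Finset ℤ)) :
    ∃ (k : ℕ) (ε : ℕ → ℝ), HasReducedMean (2 ^ k) ε (if u = 1 then 1 else 0) ∧
      ∀ p : ℕ, Odd p → (jacobiSym u p : ℝ) = ε p := by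
  simp only [Finset.mem_insert, Finset.mem_singleton] at hu
  rcases hu with rfl | rfl | rfl | rfl
  · exact ⟨0, fun _ ↦ 1, .const 1 1, fun p _ ↦ by rw [jacobiSym.one_left, Int.cast_one]⟩
  · exact ⟨2, fun p ↦ (ZMod.χ₄ p : ℝ), .mulChar (MulChar.ne_one_iff.2 ⟨-1, by decide⟩),
      fun p hp ↦ by rw [jacobiSym.at_neg_one hp]⟩
  · exact ⟨3, fun p ↦ (ZMod.χ₈ p : ℝ),
      .mulChar (MulChar.ne_one_iff.2 ⟨ZMod.unitOfCoprime 3 (by decide), by decide⟩),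
      fun p hp ↦ by rw [jacobiSym.at_two hp]⟩
  · exact ⟨3, fun p ↦ (ZMod.χ₈' p : ℝ), .mulChar (MulChar.ne_one_iff.2 ⟨-1, by decide⟩),
      fun p hp ↦ by rw [jacobiSym.at_neg_two hp]⟩

lemma exists_hasReducedMean_jacobiSym {g : ℤ} (hg : Squarefree g) :
    ∃ (k : ℕ) (ε : ℕ → ℝ), HasReducedMean (2 ^ k) ε (if g % 4 = 1 then 1 else 0) ∧
      ∀ p : ℕ, Odd p →
        (jacobiSym g p : ℝ) = ε p * ∏ q ∈ g.natAbs.primeFactors.erase 2, (jacobiSym p q : ℝ) := by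
  set s := g.natAbs.primeFactors.erase 2
  have hprime : ∀ q ∈ s, q.Prime := fun q hq ↦
    Nat.prime_of_mem_primeFactors (Finset.mem_of_mem_erase hq)
  have hodd : Odd (∏ q ∈ s, q) := Finset.prod_induction _ Odd (fun _ _ ↦ Odd.mul) odd_one
    fun q hq ↦ (hprime q hq).odd_of_ne_two (Finset.ne_of_mem_erase hq)
  obtain ⟨u, hu, hgu⟩ :=
    exists_eq_mul_chi_four_mul_self hodd (natAbs_eq_or_eq_two_mul_prod_primeFactors hg)
  obtain ⟨k, ε, hmean, hε⟩ := exists_hasReducedMean_jacobiSym_left hu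
  have hiff : g % 4 = 1 ↔ u = 1 := by
    rw [hgu, Int.mul_emod, chi_four_mul_self_emod_four hodd]
    fin_cases hu <;> norm_num
  refine ⟨k, ε, by simpa only [hiff] using hmean, fun p hp ↦ ?_⟩
  have hrec : jacobiSym g p = jacobiSym u p * ∏ q ∈ s, jacobiSym p q := by
    rw [← jacobiSym_prod_right _ fun q hq ↦ (hprime q hq).ne_zero,
      ← jacobiSym_chi_four_mul_self hodd hp, ← jacobiSym.mul_left, ← hgu]
  rw [hrec, Int.cast_mul, Int.cast_prod, hε p hp]

end Reciprocity

section PrimeProducts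

open scoped Topology

lemma one_sub_sum_le_prod_one_sub {ι : Type*} {s : Finset ι} {x : ι → ℝ}
    (h0 : ∀ i ∈ s, 0 ≤ x i) (h1 : ∀ i ∈ s, x i ≤ 1) : 1 - ∑ i ∈ s, x i ≤ ∏ i ∈ s, (1 - x i) := by
  classical
  induction s using Finset.induction_on with
  | empty => simp
  | insert j s hj ih =>
    rw [Finset.forall_mem_insert] at h0 h1
    rw [Finset.sum_insert hj, Finset.prod_insert hj]
    have hprod : ∏ i ∈ s, (1 - x i) ≤ 1 :=
      Finset.prod_le_one (fun i hi ↦ sub_nonneg.2 (h1.2 i hi)) fun i hi ↦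
        sub_le_self 1 (h0.2 i hi)
    nlinarith [ih h0.2 h1.2, h0.1]

lemma natCast_eq_one_iff_dvd_pred {p q : ℕ} (hp : 1 ≤ p) : (p : ZMod q) = 1 ↔ q ∣ p - 1 := by
  rw [← ZMod.natCast_eq_zero_iff, Nat.cast_pred hp, sub_eq_zero]

lemma prod_primesLE_one_sub_mul_eq_one (x : ℕ → ℝ) (Y : ℕ) {p : ℕ} (hp : 1 < p) :
    ∏ q ∈ Nat.primesLE Y, (1 - x q * if (p : ZMod q) = 1 then 1 else 0) =
      ∏ q ∈ (p - 1).primeFactors with ¬Y < q, (1 - x q) := by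
  simp only [mul_ite, mul_one, mul_zero, sub_ite, sub_zero, ← Finset.prod_filter]
  refine Finset.prod_congr (Finset.ext fun q ↦ ?_) fun _ _ ↦ rfl
  simp only [Finset.mem_filter, Nat.mem_primesLE, Nat.mem_primeFactors,
    natCast_eq_one_iff_dvd_pred hp.le, not_lt, ne_eq, Nat.sub_ne_zero_of_lt hp, not_false_iff,
    and_true]
  tauto

lemma abs_prod_primesLE_sub_prod_primeFactors_le {x : ℕ → ℝ} (h0 : ∀ q, 0 ≤ x q)
    (h1 : ∀ q, x q ≤ 1) (Y : ℕ) {p : ℕ} (hp : 1 < p) :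
    |∏ q ∈ Nat.primesLE Y, (1 - x q * if (p : ZMod q) = 1 then 1 else 0) -
        ∏ q ∈ (p - 1).primeFactors, (1 - x q)| ≤
      ∑ q ∈ (p - 1).primeFactors with Y < q, x q := by
  rw [prod_primesLE_one_sub_mul_eq_one x Y hp,
    ← Finset.prod_filter_mul_prod_filter_not (p - 1).primeFactors (Y < ·) fun q ↦ 1 - x q]
  set small := ∏ q ∈ (p - 1).primeFactors with ¬Y < q, (1 - x q)
  set large := ∏ q ∈ (p - 1).primeFactors with Y < q, (1 - x q)
  have hnonneg : ∀ q, 0 ≤ 1 - x q := fun q ↦ sub_nonneg.2 (h1 q)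
  have hle : ∀ q, 1 - x q ≤ 1 := fun q ↦ sub_le_self 1 (h0 q)
  have hsmall0 : 0 ≤ small := Finset.prod_nonneg fun q _ ↦ hnonneg q
  have hsmall1 : small ≤ 1 := Finset.prod_le_one (fun q _ ↦ hnonneg q) fun q _ ↦ hle q
  have hlarge1 : large ≤ 1 := Finset.prod_le_one (fun q _ ↦ hnonneg q) fun q _ ↦ hle q
  have hlarge := one_sub_sum_le_prod_one_sub
    (s := (p - 1).primeFactors.filter (Y < ·)) (fun q _ ↦ h0 q) fun q _ ↦ h1 q
  calc |small - large * small| = small * (1 - large) := by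
        rw [← one_sub_mul, mul_comm, abs_of_nonneg (mul_nonneg hsmall0 (sub_nonneg.2 hlarge1))]
    _ ≤ 1 - large := mul_le_of_le_one_left (sub_nonneg.2 hlarge1) hsmall1
    _ ≤ _ := sub_le_comm.1 hlarge

lemma tendsto_prod_primesLE_tprod_primes {u : ℕ → ℝ}
    (hu : Multipliable fun p : Nat.Primes ↦ u p) :
    Tendsto (fun Y ↦ ∏ q ∈ Nat.primesLE Y, u q) atTop (𝓝 (∏' p : Nat.Primes, u p)) := by
  have hmono : Monotone fun Y ↦ (Nat.primesLE Y).subtype Nat.Prime := fun _ _ h ↦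
    Finset.subtype_mono (Nat.primesLE_mono h)
  refine (hu.hasProd.comp (tendsto_atTop_finset_of_monotone hmono fun p ↦
    ⟨p, Finset.mem_subtype.2 (Nat.mem_primesLE.2 ⟨le_rfl, p.2⟩)⟩)).congr fun Y ↦ ?_
  exact Finset.prod_subtype_of_mem u fun q hq ↦ Nat.prime_of_mem_primesLE hq

end PrimeProducts

section SieveWeight

open scoped Topology

/-- The weight of the prime `q` in the product
`∏ q ∣ n, (1 - sieveWeight h q) = if n.gcd h = 1 then φ n / n else 0`. -/
noncomputable def sieveWeight (h q : ℕ) : ℝ := if q ∣ h then 1 else (q : ℝ)⁻¹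

lemma sieveWeight_nonneg (h q : ℕ) : 0 ≤ sieveWeight h q := by
  unfold sieveWeight
  split_ifs <;> positivity

lemma sieveWeight_le_one (h q : ℕ) : sieveWeight h q ≤ 1 := by
  unfold sieveWeight
  split_ifs
  · exact le_rfl
  · exact Nat.cast_inv_le_one q

lemma prod_primeFactors_one_sub_sieveWeight {n : ℕ} (hn : n ≠ 0) (h : ℕ) :
    ∏ q ∈ n.primeFactors, (1 - sieveWeight h q) =
      if n.gcd h = 1 then (n.totient : ℝ) / n else 0 := by
  split_ifs with hnh
  · have htotient : (n.totient : ℝ) = n * ∏ q ∈ n.primeFactors, (1 - (q : ℝ)⁻¹) := by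
      have := congrArg (Rat.cast : ℚ → ℝ) n.totient_eq_mul_prod_factors
      push_cast at this
      exact this
    rw [htotient, mul_div_cancel_left₀ _ (Nat.cast_ne_zero.2 hn)]
    refine Finset.prod_congr rfl fun q hq ↦ ?_
    have hqh : ¬q ∣ h := fun hqh ↦ Nat.not_coprime_of_dvd_of_dvd
      (Nat.prime_of_mem_primeFactors hq).one_lt (Nat.dvd_of_mem_primeFactors hq) hqh hnh
    rw [sieveWeight, if_neg hqh]
  · obtain ⟨q, hq, hqn, hqh⟩ := Nat.Prime.not_coprime_iff_dvd.1 hnh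
    exact Finset.prod_eq_zero (Nat.mem_primeFactors.2 ⟨hq, hqn, hn⟩)
      (by rw [sieveWeight, if_pos hqh, sub_self])

lemma summable_inv_mul_pred : Summable fun n : ℕ ↦ ((n : ℝ) * (n - 1))⁻¹ := by
  rw [← summable_nat_add_iff 2]
  refine Summable.of_nonneg_of_le (fun n ↦ ?_) (fun n ↦ ?_)
    ((summable_nat_add_iff 1).2 (Real.summable_nat_pow_inv.2 one_lt_two))
  all_goals push_cast
  · exact inv_nonneg.2 (mul_nonneg (by positivity) (by linarith [n.cast_nonneg (α := ℝ)]))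
  · gcongr
    nlinarith [n.cast_nonneg (α := ℝ)]

lemma multipliable_ite_dvd_one_sub_div (h : ℕ) :
    Multipliable fun p : Nat.Primes ↦ if (p : ℕ) ∣ h then (1 : ℝ) else
      1 - 1 / (((p : ℕ) : ℝ) * (((p : ℕ) : ℝ) - 1)) := by
  let u : ℕ → ℝ := fun n ↦ if n ∣ h then 0 else -((n : ℝ) * (n - 1))⁻¹
  have hu : Summable fun n ↦ ‖u n‖ := by
    refine Summable.of_nonneg_of_le (fun n ↦ norm_nonneg _) (fun n ↦ ?_)
      summable_inv_mul_pred.norm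
    dsimp only [u]
    split_ifs
    · rw [norm_zero]
      exact norm_nonneg _
    · rw [norm_neg]
  refine (multipliable_one_add_of_summable (f := fun p : Nat.Primes ↦ u p)
    (hu.comp_injective Subtype.val_injective)).congr fun p ↦ ?_
  dsimp only [u]
  split_ifs <;> ring

lemma prod_primeFactors_eq_prod_primesLE_ite {h Y : ℕ} (hh : h ≠ 0) (hY : h ≤ Y) (f : ℕ → ℝ) :
    ∏ q ∈ h.primeFactors, f q = ∏ q ∈ Nat.primesLE Y, if q ∣ h then f q else 1 := by
  rw [← Finset.prod_filter]
  refine Finset.prod_congr (Finset.ext fun q ↦ ?_) fun _ _ ↦ rfl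
  rw [Nat.mem_primeFactors, Finset.mem_filter, Nat.mem_primesLE]
  exact ⟨fun ⟨hq, hqh, _⟩ ↦ ⟨⟨(Nat.le_of_dvd hh.bot_lt hqh).trans hY, hq⟩, hqh⟩,
    fun ⟨⟨_, hq⟩, hqh⟩ ↦ ⟨hq, hqh, hh⟩⟩

lemma tendsto_prod_primesLE_one_sub_sieveWeight_div {h : ℕ} (hh : h ≠ 0) :
    Tendsto (fun Y ↦ ∏ q ∈ Nat.primesLE Y, (1 - sieveWeight h q / (q - 1))) atTop
      (𝓝 ((∏ p ∈ h.primeFactors, (1 - 1 / ((p : ℝ) - 1))) *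
        ∏' p : Nat.Primes, if (p : ℕ) ∣ h then (1 : ℝ) else
          1 - 1 / (((p : ℕ) : ℝ) * (((p : ℕ) : ℝ) - 1)))) := by
  refine ((tendsto_prod_primesLE_tprod_primes
    (u := fun p ↦ if p ∣ h then (1 : ℝ) else 1 - 1 / ((p : ℝ) * (p - 1)))
    (multipliable_ite_dvd_one_sub_div h)).const_mul _).congr' ?_
  filter_upwards [eventually_ge_atTop h] with Y hY
  rw [prod_primeFactors_eq_prod_primesLE_ite hh hY, ← Finset.prod_mul_distrib]
  refine Finset.prod_congr rfl fun q _ ↦ ?_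
  rw [sieveWeight]
  split_ifs
  · rw [mul_one]
  · rw [one_mul, ← div_div, one_div]

lemma moebius_eq_prod_primeFactors {n : ℕ} (hn : Squarefree n) :
    ArithmeticFunction.moebius n = ∏ _q ∈ n.primeFactors, (-1 : ℤ) := by
  nth_rw 1 [← Nat.prod_primeFactors_of_squarefree hn]
  rw [ArithmeticFunction.isMultiplicative_moebius.map_prod_of_prime _
    fun q ↦ Nat.prime_of_mem_primeFactors]
  exact Finset.prod_congr rfl fun q hq ↦
    ArithmeticFunction.moebius_apply_prime (Nat.prime_of_mem_primeFactors hq)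

lemma moebius_mul_prod_eq_prod_sieveWeight (h : ℕ) {g d : ℤ} (hg : Squarefree g)
    (hd : d = if g % 4 = 1 then g else 4 * g) :
    (ArithmeticFunction.moebius d.natAbs : ℝ) *
        (∏ q ∈ d.natAbs.primeFactors.filter (fun q ↦ q ∣ h), (1 / ((q : ℝ) - 2))) *
        (∏ q ∈ d.natAbs.primeFactors.filter (fun q ↦ ¬q ∣ h), (1 / ((q : ℝ) ^ 2 - q - 1))) =
      (if g % 4 = 1 then 1 else 0) * ∏ q ∈ g.natAbs.primeFactors.erase 2,
        -(sieveWeight h q / (q - 1 - sieveWeight h q)) := by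
  split_ifs at hd ⊢ with hg4
  · have h2 : 2 ∉ g.natAbs.primeFactors := fun h2 ↦ by
      have := Nat.dvd_of_mem_primeFactors h2
      omega
    rw [hd, one_mul, Finset.erase_eq_of_notMem h2,
      moebius_eq_prod_primeFactors (Int.squarefree_natAbs.2 hg), Finset.prod_filter,
      Finset.prod_filter, Int.cast_prod, ← Finset.prod_mul_distrib, ← Finset.prod_mul_distrib]
    refine Finset.prod_congr rfl fun q hq ↦ ?_
    have hq0 : (q : ℝ) ≠ 0 := Nat.cast_ne_zero.2 (Nat.prime_of_mem_primeFactors hq).ne_zero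
    by_cases hqh : q ∣ h
    · rw [sieveWeight, if_pos hqh, if_pos hqh, if_neg (not_not.2 hqh)]
      ring
    · rw [sieveWeight, if_neg hqh, if_neg hqh, if_pos hqh,
        show (q : ℝ) - 1 - (q : ℝ)⁻¹ = (q ^ 2 - q - 1) / q by field_simp, inv_eq_one_div,
        div_div_div_cancel_right₀ hq0]
      ring
  · have hd4 : ¬Squarefree d.natAbs := fun hsq ↦ by
      have := hsq 2 ⟨g.natAbs, by rw [hd, Int.natAbs_mul]; rfl⟩
      simp at this
    rw [ArithmeticFunction.moebius_eq_zero_of_not_squarefree hd4]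
    simp only [Int.cast_zero, zero_mul]

end SieveWeight

section TruncatedMean

lemma hasReducedMean_prod_mul_prod_jacobiSym {c : ℕ → ℝ} {s t : Finset ℕ}
    (hs : ∀ q ∈ s, q.Prime) (hts : t ⊆ s) (ht : ∀ q ∈ t, q ≠ 2) (hc : ∀ q ∈ t, c q < q - 1) :
    HasReducedMean (∏ q ∈ s, q)
      (fun k ↦ (∏ q ∈ s, (1 - c q * if (k : ZMod q) = 1 then 1 else 0)) *
        ∏ q ∈ t, (jacobiSym k q : ℝ))
      ((∏ q ∈ s, (1 - c q / (q - 1))) * ∏ q ∈ t, -(c q / (q - 1 - c q))) := by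
  have hmean := HasReducedMean.prod hs
    (f := fun q k ↦ (1 - c q * if (k : ZMod q) = 1 then 1 else 0) *
      if q ∈ t then (jacobiSym k q : ℝ) else 1)
    (c := fun q ↦ (1 - c q / (q - 1)) * if q ∈ t then -(c q / (q - 1 - c q)) else 1) fun q hq ↦ by
      split_ifs with hqt
      · have hpred : (q : ℝ) - 1 ≠ 0 :=
          sub_ne_zero.2 (Nat.cast_ne_one.2 (hs q hq).one_lt.ne')
        have hne : (q : ℝ) - 1 - c q ≠ 0 := (sub_pos.2 (hc q hqt)).ne'
        convert HasReducedMean.one_sub_mul_eq_one_mul_jacobiSym (hs q hq) (ht q hqt) (c q) using 1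
        field_simp
      · simpa only [mul_one] using HasReducedMean.one_sub_mul_eq_one (hs q hq) (c q)
  simpa only [Finset.prod_mul_distrib, Finset.prod_ite_mem, Finset.inter_eq_right.2 hts]
    using hmean

lemma hasLogPrimeMean_one_sub_jacobiSym_mul_prod {g : ℤ} (hg : Squarefree g) {c : ℕ → ℝ}
    {s : Finset ℕ} (hs : ∀ q ∈ s, q.Prime) (h2 : 2 ∈ s) (hgs : g.natAbs.primeFactors.erase 2 ⊆ s)
    (hc : ∀ q ∈ g.natAbs.primeFactors.erase 2, c q < q - 1) :
    HasLogPrimeMean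
      (fun p ↦ (1 - jacobiSym g p) * ∏ q ∈ s, (1 - c q * if (p : ZMod q) = 1 then 1 else 0))
      ((∏ q ∈ s, (1 - c q / (q - 1))) * (1 - (if g % 4 = 1 then 1 else 0) *
        ∏ q ∈ g.natAbs.primeFactors.erase 2, -(c q / (q - 1 - c q)))) := by
  obtain ⟨k, ε, hε, hrec⟩ := exists_hasReducedMean_jacobiSym hg
  have hprime : ∀ q ∈ s.erase 2, q.Prime := fun q hq ↦ hs q (Finset.mem_of_mem_erase hq)
  have hcop : (2 ^ k).Coprime (∏ q ∈ s.erase 2, q) := Nat.Coprime.prod_right fun q hq ↦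
    ((Nat.coprime_primes Nat.prime_two (hprime q hq)).2 (Finset.ne_of_mem_erase hq).symm).pow_left k
  have hsieve := HasReducedMean.prod hprime fun q hq ↦
    HasReducedMean.one_sub_mul_eq_one (hprime q hq) (c q)
  have hsymbol := hasReducedMean_prod_mul_prod_jacobiSym hprime
    (Finset.subset_erase.2 ⟨hgs, Finset.notMem_erase 2 _⟩) (fun q ↦ Finset.ne_of_mem_erase) hc
  have hmean := ((((HasReducedMean.const (2 ^ k) 1).mul hcop hsieve).sub
    (hε.mul hcop hsymbol)).const_mul (1 - c 2)).hasLogPrimeMean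
  convert hmean.congr_eventually ?_ using 1
  · rw [← Finset.mul_prod_erase s _ h2]
    push_cast
    ring
  · filter_upwards [eventually_gt_atTop 2] with p hp2 hp
    have hodd := hp.odd_of_ne_two hp2.ne'
    have hp1 : (p : ZMod 2) = 1 := ZMod.natCast_eq_one_iff_odd.2 hodd
    rw [hrec p hodd, ← Finset.mul_prod_erase s _ h2, if_pos hp1]
    ring

end TruncatedMean

section SieveMean

lemma one_sub_jacobiSym_mem_Icc (g : ℤ) (p : ℕ) : (1 - jacobiSym g p : ℝ) ∈ Set.Icc 0 2 := by
  rcases jacobiSym.trichotomy g p with h | h | h <;> rw [h] <;> norm_num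

lemma abs_truncated_sub_full_le (g : ℤ) {h Y p : ℕ} (hh : h ≠ 0) (hY : h ≤ Y) (hp : 1 < p) :
    |(1 - jacobiSym g p) *
          ∏ q ∈ Nat.primesLE Y, (1 - sieveWeight h q * if (p : ZMod q) = 1 then 1 else 0) -
        (1 - jacobiSym g p) * ∏ q ∈ (p - 1).primeFactors, (1 - sieveWeight h q)| ≤
      2 * ∑ q ∈ (p - 1).primeFactors with Y < q, (q : ℝ)⁻¹ := by
  obtain ⟨h0, h2⟩ := one_sub_jacobiSym_mem_Icc g p
  have hweight : ∑ q ∈ (p - 1).primeFactors with Y < q, sieveWeight h q =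
      ∑ q ∈ (p - 1).primeFactors with Y < q, (q : ℝ)⁻¹ :=
    Finset.sum_congr rfl fun q hq ↦ if_neg fun hqh ↦
      ((Nat.le_of_dvd hh.bot_lt hqh).trans hY).not_gt (Finset.mem_filter.1 hq).2
  rw [← mul_sub, abs_mul, abs_of_nonneg h0, ← hweight]
  gcongr
  exact abs_prod_primesLE_sub_prod_primeFactors_le
    (sieveWeight_nonneg h) (sieveWeight_le_one h) Y hp

theorem hasLogPrimeMean_one_sub_jacobiSym_mul_prod_primeFactors {g : ℤ} (hg : Squarefree g)
    {h : ℕ} (hh : h ≠ 0) :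
    HasLogPrimeMean
      (fun p ↦ (1 - jacobiSym g p) * ∏ q ∈ (p - 1).primeFactors, (1 - sieveWeight h q))
      (((∏ p ∈ h.primeFactors, (1 - 1 / ((p : ℝ) - 1))) *
          ∏' p : Nat.Primes, if (p : ℕ) ∣ h then (1 : ℝ) else
            1 - 1 / (((p : ℕ) : ℝ) * (((p : ℕ) : ℝ) - 1))) *
        (1 - (if g % 4 = 1 then 1 else 0) * ∏ q ∈ g.natAbs.primeFactors.erase 2,
          -(sieveWeight h q / (q - 1 - sieveWeight h q)))) := by
  refine HasLogPrimeMean.of_tendsto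
    (f := fun Y p ↦ (1 - jacobiSym g p) *
      ∏ q ∈ Nat.primesLE Y, (1 - sieveWeight h q * if (p : ZMod q) = 1 then 1 else 0)) ?_
    ((tendsto_prod_primesLE_one_sub_sieveWeight_div hh).mul_const _) fun ε hε ↦ ?_
  · filter_upwards [eventually_ge_atTop 2, eventually_ge_atTop g.natAbs] with Y hY2 hYg
    refine hasLogPrimeMean_one_sub_jacobiSym_mul_prod hg
      (fun q ↦ Nat.prime_of_mem_primesLE) (Nat.mem_primesLE.2 ⟨hY2, Nat.prime_two⟩)
      (fun q hq ↦ ?_) fun q hq ↦ ?_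
    all_goals have hqg := Finset.mem_of_mem_erase hq
    · exact Nat.mem_primesLE.2
        ⟨(Nat.le_of_mem_primeFactors hqg).trans hYg, Nat.prime_of_mem_primeFactors hqg⟩
    · have hq3 : (3 : ℝ) ≤ q := mod_cast (Nat.prime_of_mem_primeFactors hqg).two_le.lt_of_ne'
        (Finset.ne_of_mem_erase hq)
      linarith [sieveWeight_le_one h q]
  · filter_upwards [eventually_sum_large_primeFactors_le (half_pos hε), eventually_ge_atTop h]
      with Y htail hY N
    calc _ ≤ ∑ p ∈ Nat.primesLE N,
            2 * ((∑ q ∈ (p - 1).primeFactors with Y < q, (q : ℝ)⁻¹) * Real.log p) := by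
          refine Finset.sum_le_sum fun p hp ↦ ?_
          rw [← mul_assoc]
          exact mul_le_mul_of_nonneg_right
            (abs_truncated_sub_full_le g hh hY (Nat.prime_of_mem_primesLE hp).one_lt)
            (Real.log_natCast_nonneg p)
      _ ≤ ε * N := by
          rw [← Finset.mul_sum]
          linarith [htail N]

lemma legendreSym_eq_jacobiSym_of_eq_mul_sq {p : ℕ} [Fact p.Prime] {g g₁ m : ℤ}
    (hgm : g = g₁ * m ^ 2) (hpg : ¬(p : ℤ) ∣ g) : legendreSym p g = jacobiSym g₁ p := by
  have hpm : (m : ZMod p) ≠ 0 := fun hm ↦ hpg <| hgm ▸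
    (((ZMod.intCast_zmod_eq_zero_iff_dvd m p).1 hm).trans (dvd_pow_self m two_ne_zero)).mul_left g₁
  rw [hgm, legendreSym.mul, legendreSym.sq_one' p hpm, mul_one, jacobiSym.legendreSym.to_jacobiSym]

lemma one_sub_legendreSym_mul_prod_primeFactors {p : ℕ} [hp : Fact p.Prime] {g : ℤ}
    (hpg : ¬(p : ℤ) ∣ g) (h : ℕ) :
    (1 - legendreSym p g : ℝ) * ∏ q ∈ (p - 1).primeFactors, (1 - sieveWeight h q) =
      if legendreSym p g = -1 ∧ (p - 1).gcd h = 1 then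
        2 * ((p - 1).totient : ℝ) / ((p : ℝ) - 1) else 0 := by
  rw [prod_primeFactors_one_sub_sieveWeight (Nat.sub_ne_zero_of_lt hp.out.one_lt),
    Nat.cast_pred hp.out.pos]
  rcases legendreSym.eq_one_or_neg_one p
    (mt (ZMod.intCast_zmod_eq_zero_iff_dvd g p).1 hpg) with hsymbol | hsymbol
  · simp [hsymbol]
  · rw [hsymbol, mul_ite, mul_zero, Int.cast_neg, Int.cast_one, sub_neg_eq_add,
      one_add_one_eq_two, mul_div_assoc]
    simp only [true_and]

lemma two_mul_totient_pred_div_mem_Icc {p : ℕ} (hp : 1 < p) :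
    2 * ((p - 1).totient : ℝ) / ((p : ℝ) - 1) ∈ Set.Icc 0 2 := by
  have hpred : (0 : ℝ) < p - 1 := sub_pos.2 (mod_cast hp)
  have htotient : ((p - 1).totient : ℝ) ≤ p - 1 := by
    rw [← Nat.cast_pred (zero_lt_one.trans hp)]
    exact mod_cast Nat.totient_le _
  exact ⟨by positivity, (div_le_iff₀ hpred).2 (by gcongr)⟩

end SieveMean

theorem moree_summation_formula_general (g : ℤ) (hg : g ≠ 0) (h : ℕ) (hh : h ≠ 0)
    (g₁ : ℤ) (hg₁ : Squarefree g₁) (hker : ∃ m : ℤ, g = g₁ * m ^ 2)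
    (d : ℤ) (hd : d = if g₁ % 4 = 1 then g₁ else 4 * g₁)
    (φg : ℕ → ℝ)
    (hφg : ∀ (p : ℕ) (hp : p.Prime),
      φg p = if _ : Odd p ∧ ¬ (p : ℤ) ∣ g ∧
          (@legendreSym p ⟨hp⟩ g = -1 ∧ Nat.gcd (p - 1) h = 1)
        then 2 * ((p - 1).totient : ℝ) / ((p : ℝ) - 1) else 0) :
    Tendsto (fun N : ℕ ↦
        (1 / (N : ℝ)) * ∑ i ∈ Finset.range N, φg (Nat.nth Nat.Prime i))
      atTop
      (nhds (
        ((∏ p ∈ h.primeFactors, (1 - 1 / ((p : ℝ) - 1))) *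
          ∏' p : Nat.Primes, if (p : ℕ) ∣ h then (1 : ℝ) else
            1 - 1 / (((p : ℕ) : ℝ) * (((p : ℕ) : ℝ) - 1))) *
        (1 - (ArithmeticFunction.moebius d.natAbs : ℝ) *
          (∏ q ∈ d.natAbs.primeFactors.filter (fun q ↦ q ∣ h), (1 / ((q : ℝ) - 2))) *
          (∏ q ∈ d.natAbs.primeFactors.filter (fun q ↦ ¬ q ∣ h),
            (1 / ((q : ℝ) ^ 2 - q - 1)))))) := by
  obtain ⟨m, hm⟩ := hker
  rw [moebius_mul_prod_eq_prod_sieveWeight h hg₁ hd]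
  refine ((hasLogPrimeMean_one_sub_jacobiSym_mul_prod_primeFactors hg₁ hh).congr_eventually
    ?_).tendsto_average_nth_prime (C := 2) fun p hp ↦ ?_
  · filter_upwards [eventually_gt_atTop 2, eventually_gt_atTop g.natAbs] with p hp2 hpg hp
    have : Fact p.Prime := ⟨hp⟩
    have hndvd : ¬(p : ℤ) ∣ g := fun hdvd ↦
      hpg.not_ge (Nat.le_of_dvd (Int.natAbs_pos.2 hg) (Int.natCast_dvd.1 hdvd))
    rw [← legendreSym_eq_jacobiSym_of_eq_mul_sq hm hndvd,
      one_sub_legendreSym_mul_prod_primeFactors hndvd, hφg p hp]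
    simp only [hp.odd_of_ne_two hp2.ne', hndvd, not_false_eq_true, true_and, dite_eq_ite]
  · obtain ⟨h0, h2⟩ := two_mul_totient_pred_div_mem_Icc hp.one_lt
    rw [hφg p hp]
    split_ifs
    · rwa [abs_of_nonneg h0]
    · norm_num

/-- For `g` not a perfect square, written as `g = g₀^h` with `h` maximal, and `d` the
discriminant of `ℚ(√g)`, the average `(1/N) ∑_{i=1}^N φ_g(p_i)` tends to
`A(g) = A_h · A_d`, where `φ_g(p) = 2 φ(p-1)/(p-1)` if `p` is odd, `p ∤ g`,
`(g/p) = -1` and `gcd(p-1, h) = 1`, and `φ_g(p) = 0` otherwise. -/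
theorem moree_summation_formula (g : ℤ) (hg : 1 < |g|) (hsq : ¬ IsSquare g)
    (g₀ : ℤ) (h : ℕ) (hgh : g = g₀ ^ h)
    (hmax : ∀ (b : ℤ) (m : ℕ), g = b ^ m → m ≤ h)
    (g₁ : ℤ) (hg₁ : Squarefree g₁) (hker : ∃ m : ℤ, g = g₁ * m ^ 2)
    (d : ℤ) (hd : d = if g₁ % 4 = 1 then g₁ else 4 * g₁)
    (φg : ℕ → ℝ)
    (hφg : ∀ (p : ℕ) (hp : p.Prime),
      φg p = if _ : Odd p ∧ ¬ (p : ℤ) ∣ g ∧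
          (@legendreSym p ⟨hp⟩ g = -1 ∧ Nat.gcd (p - 1) h = 1)
        then 2 * ((p - 1).totient : ℝ) / ((p : ℝ) - 1) else 0) :
    Tendsto (fun N : ℕ =>
        (1 / (N : ℝ)) * ∑ i ∈ Finset.range N, φg (Nat.nth Nat.Prime i))
      atTop
      (nhds (
        -- A_h
        ((∏ p ∈ h.primeFactors, (1 - 1 / ((p : ℝ) - 1))) *
          ∏' p : Nat.Primes, if (p : ℕ) ∣ h then (1 : ℝ) else
            1 - 1 / (((p : ℕ) : ℝ) * (((p : ℕ) : ℝ) - 1))) *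
        -- A_d
        (1 - (ArithmeticFunction.moebius d.natAbs : ℝ) *
          (∏ q ∈ d.natAbs.primeFactors.filter (fun q => q ∣ h), (1 / ((q : ℝ) - 2))) *
          (∏ q ∈ d.natAbs.primeFactors.filter (fun q => ¬ q ∣ h),
            (1 / ((q : ℝ) ^ 2 - q - 1)))))) := by
  have hg0 : g ≠ 0 := abs_pos.1 (zero_lt_one.trans hg)
  have hh : h ≠ 0 := by
    rintro rfl
    simp [hgh] at hg
  exact moree_summation_formula_general g hg0 h hh g₁ hg₁ hker d hd φg hφg
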